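/- arXiv:1503.01605 — 2 statements merged into one kernel-verified Lean document; each statement's English description precedes it below -/
import Mathlib

section
/- Let F : 𝕋 → ℂ be a continuous surjection onto a Jordan curve γ bounding a bounded domain D, and let wₙ be a sequence of univalent harmonic mappings of the unit disk onto D converging locally uniformly to w = P[F]. If w is not constant and its image does not lie on a straight line, then w is univalent on the unit disk. -/
open MeasureTheory Set Real Filter

/-- The Poisson kernel `P(r,t) = (1−r²)/(2π(1−2r cos t + r²))`. -/
noncomputable def poissonKer (r t : ℝ) : ℝ :=
  (1 - r ^ 2) / (2 * π * (1 - 2 * r * Real.cos t + r ^ 2))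

/-- The Poisson extension `P[F](z)` of a `2π`-periodic boundary function `F : ℝ → ℂ`. -/
noncomputable def poissonExt (F : ℝ → ℂ) (z : ℂ) : ℂ :=
  ∫ t in (0:ℝ)..(2 * π), (poissonKer ‖z‖ (t - Complex.arg z) : ℂ) * F t

/-- A complex-valued harmonic mapping on an open set: `C²` with vanishing Laplacian. -/
def HarmonicOn (u : ℂ → ℂ) (s : Set ℂ) : Prop :=
  ContDiffOn ℝ 2 u s ∧
  ∀ z ∈ s, iteratedFDeriv ℝ 2 u z ![1, 1] + iteratedFDeriv ℝ 2 u z ![Complex.I, Complex.I] = 0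

/-!
An injective continuous map on a domain has a local degree (the winding number of the image of a
small circle about a point), which does not depend on the point. Passing to a subfamily of the
maps, and conjugating everything if necessary, this degree is nonnegative. Locally a harmonic
mapping is `h + conj g` with `h`, `g` holomorphic, and nonnegative degree forces `|g'| ≤ |h'|`:
were `|g'| > |h'|` at some point, the mapping would behave there like `conj g`, with negative
degree.

By the Borel–Carathéodory inequality the functions `h` and `g` may be chosen to converge along with
the harmonic mappings, so that `|g'| ≤ |h'|` holds in the limit. By the maximum principle the
dilatation `a = g' / h'` then either satisfies `|a| < 1` at the given point, and the limit has the
positive local degree of `h`, or it is a constant of modulus one, and the limit maps a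
neighbourhood, hence by analyticity the whole domain, into a line. Away from the latter case,
Rouché's theorem shows that a value taken by the limit at two points is taken near both of them by
the approximating maps, contradicting their injectivity.
-/

open InnerProductSpace
open scoped Topology ComplexConjugate

theorem exists_forall_of_eventually_nhdsWithin {X Y : Type*} [TopologicalSpace X] [Nonempty Y]
    {S : Set X} (hS : IsPreconnected S) {P : X → Y → Prop}
    (huniq : ∀ x ∈ S, ∀ y y', P x y → P x y' → y = y')
    (hloc : ∀ x ∈ S, ∃ y, ∀ᶠ x' in 𝓝[S] x, P x' y) : ∃ y, ∀ x ∈ S, P x y := by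
  obtain rfl | ⟨x₀, hx₀⟩ := S.eq_empty_or_nonempty
  · exact ⟨Classical.arbitrary Y, by simp⟩
  obtain ⟨y, hy⟩ := hloc x₀ hx₀
  refine ⟨y, fun x hx ↦ ?_⟩
  have hiff : P x₀ y ↔ P x y := by
    refine hS.induction₂ (fun x x' ↦ P x y ↔ P x' y) (fun x hx ↦ ?_)
      (fun _ _ _ _ _ _ ↦ Iff.trans) (fun _ _ _ _ ↦ Iff.symm) hx₀ hx
    obtain ⟨y', hy'⟩ := hloc x hx
    have hxy' : P x y' := hy'.self_of_nhdsWithin hx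
    filter_upwards [hy', self_mem_nhdsWithin] with x' hx' hmem
    exact ⟨fun h ↦ huniq x hx _ _ hxy' h ▸ hx', fun h ↦ huniq x' hmem _ _ hx' h ▸ hxy'⟩
  exact hiff.1 (hy.self_of_nhdsWithin hx₀)

section Winding

/-- The closed curve `γ : Circle → ℂ`, which avoids the origin, winds `k` times around it. It is
encoded by a continuous logarithm `θ` of `γ` along `t ↦ exp (i t)`, which increases by `2πik` over
a period. -/
def HasWinding (γ : Circle → ℂ) (k : ℤ) : Prop :=
  ∃ θ : ℝ → ℂ, Continuous θ ∧ (∀ t, Complex.exp (θ t) = γ (Circle.exp t)) ∧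
    θ (2 * π) - θ 0 = k * (2 * π * Complex.I)

namespace HasWinding

variable {γ γ₁ γ₂ : Circle → ℂ} {k l : ℤ}

theorem mul (h₁ : HasWinding γ₁ k) (h₂ : HasWinding γ₂ l) :
    HasWinding (fun w ↦ γ₁ w * γ₂ w) (k + l) := by
  obtain ⟨θ₁, hc₁, he₁, hk⟩ := h₁
  obtain ⟨θ₂, hc₂, he₂, hl⟩ := h₂
  refine ⟨θ₁ + θ₂, hc₁.add hc₂, fun t ↦ by simp [Complex.exp_add, he₁, he₂], ?_⟩
  push_cast [Pi.add_apply]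
  linear_combination hk + hl

theorem conjugate (h : HasWinding γ k) : HasWinding (fun w ↦ conj (γ w)) (-k) := by
  obtain ⟨θ, hc, he, hk⟩ := h
  refine ⟨fun t ↦ conj (θ t), Complex.continuous_conj.comp hc,
    fun t ↦ by rw [Complex.exp_conj, he], ?_⟩
  rw [← map_sub, hk]
  simp [Complex.conj_ofNat]

theorem unique (h₁ : HasWinding γ k) (h₂ : HasWinding γ l) : k = l := by
  obtain ⟨θ₁, hc₁, he₁, hk⟩ := h₁
  obtain ⟨θ₂, hc₂, he₂, hl⟩ := h₂
  have hexp : ∀ t, Complex.exp (θ₁ t) = Complex.exp (θ₂ t) := fun t ↦ (he₁ t).trans (he₂ t).symm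
  obtain ⟨n, hn⟩ := Complex.exp_eq_exp_iff_exists_int.1 (hexp 0)
  have hθ : θ₁ = fun t ↦ θ₂ t + n * (2 * π * Complex.I) :=
    Complex.isCoveringMap_exp.eq_of_comp_eq hc₁ (by fun_prop)
      (funext fun t ↦ Subtype.ext <| by
        simpa [Complex.exp_add, Complex.exp_int_mul_two_pi_mul_I] using hexp t) 0 hn
  have hkl : (k : ℂ) * (2 * π * Complex.I) = l * (2 * π * Complex.I) := by
    rw [← hk, ← hl, hθ]
    ring
  exact_mod_cast mul_right_cancel₀ Complex.two_pi_I_ne_zero hkl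

theorem const {c : ℂ} (hc : c ≠ 0) : HasWinding (fun _ ↦ c) 0 :=
  ⟨fun _ ↦ Complex.log c, continuous_const, fun _ ↦ Complex.exp_log hc, by simp⟩

theorem pow (m : ℕ) : HasWinding (fun w ↦ (w : ℂ) ^ m) m :=
  ⟨fun t ↦ m * (t * Complex.I), by fun_prop, fun t ↦ by simp [Complex.exp_nat_mul],
    by push_cast; ring⟩

theorem continuous (h : HasWinding γ k) : Continuous γ := by
  obtain ⟨θ, hc, he, -⟩ := h
  refine Circle.isAddQuotientCoveringMap_exp.toIsQuotientMap.continuous_iff.2 ?_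
  simpa only [Function.comp_def, ← he] using hc.cexp

theorem ne_zero (h : HasWinding γ k) (w : Circle) : γ w ≠ 0 := by
  obtain ⟨θ, -, he, -⟩ := h
  obtain ⟨t, rfl⟩ := Circle.isAddQuotientCoveringMap_exp.surjective w
  exact he t ▸ Complex.exp_ne_zero _

/-- Rouché's theorem: the quotient `γ₂ / γ₁` stays in the disc of radius `1` about `1`, where the
principal logarithm is continuous. -/
theorem of_norm_sub_lt (h : HasWinding γ₁ k) (hγ₂ : Continuous γ₂)
    (hlt : ∀ w, ‖γ₂ w - γ₁ w‖ < ‖γ₁ w‖) : HasWinding γ₂ k := by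
  have hslit : ∀ w, γ₂ w / γ₁ w ∈ Complex.slitPlane := fun w ↦ by
    have hdiv : γ₂ w / γ₁ w = 1 + (γ₂ w - γ₁ w) / γ₁ w := by
      have := h.ne_zero w
      field_simp
      ring
    rw [hdiv]
    refine Complex.mem_slitPlane_of_norm_lt_one ?_
    rw [norm_div]
    exact (div_lt_one (norm_pos_iff.2 (h.ne_zero w))).2 (hlt w)
  have hquot : HasWinding (fun w ↦ γ₂ w / γ₁ w) 0 :=
    ⟨fun t ↦ Complex.log (γ₂ (Circle.exp t) / γ₁ (Circle.exp t)),
      ((hγ₂.div h.continuous h.ne_zero).comp Circle.exp.continuous).clog fun t ↦ hslit _,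
      fun t ↦ Complex.exp_log (Complex.slitPlane_ne_zero (hslit _)), by simp⟩
  simpa [mul_div_cancel₀ _ (h.ne_zero _)] using h.mul hquot

end HasWinding

theorem exists_hasWinding {γ : Circle → ℂ} (hγ : Continuous γ) (hne : ∀ w, γ w ≠ 0) :
    ∃ k, HasWinding γ k := by
  obtain ⟨θ, ⟨-, hθ⟩, -⟩ := Complex.isCoveringMapOn_exp.existsUnique_continuousMap_lifts
    (⟨fun t ↦ γ (Circle.exp t), by fun_prop⟩ : C(ℝ, ℂ)) (a₀ := 0)
    (Complex.exp_log (hne _)) (fun t ↦ hne _)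
  have hexp : ∀ t, Complex.exp (θ t) = γ (Circle.exp t) := congrFun hθ
  obtain ⟨k, hk⟩ := Complex.exp_eq_exp_iff_exists_int.1
    (show Complex.exp (θ (2 * π)) = Complex.exp (θ 0) by simp [hexp])
  exact ⟨k, θ, θ.continuous, hexp, by rw [hk]; ring⟩

theorem exists_forall_hasWinding {X : Type*} [TopologicalSpace X] {S : Set X}
    (hS : IsPreconnected S) {H : X → Circle → ℂ}
    (hH : ContinuousOn (Function.uncurry H) (S ×ˢ univ)) (hne : ∀ x ∈ S, ∀ w, H x w ≠ 0) :
    ∃ k, ∀ x ∈ S, HasWinding (H x) k := by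
  have hcont : ∀ x ∈ S, Continuous (H x) := fun x hx ↦ continuousOn_univ.1 <|
    hH.comp (f := fun w ↦ (x, w)) (by fun_prop) fun w hw ↦ ⟨hx, hw⟩
  refine exists_forall_of_eventually_nhdsWithin hS (fun x _ k l ↦ HasWinding.unique) fun x hx ↦ ?_
  have hxc := hcont x hx
  obtain ⟨k, hk⟩ := exists_hasWinding hxc (hne x hx)
  have hclose : ∀ᶠ x' in 𝓝[S] x, ∀ w, ‖H x' w - H x w‖ < ‖H x w‖ := by
    suffices h : ∀ᶠ p in 𝓝[S] x ×ˢ 𝓝ˢ univ, ‖H p.1 p.2 - H x p.2‖ < ‖H x p.2‖ by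
      rw [nhdsSet_univ, ← principal_univ, eventually_prod_principal_iff] at h
      simpa using h
    refine isCompact_univ.mem_prod_nhdsSet_of_forall fun w _ ↦ ?_
    have hleft : Tendsto (Function.uncurry H) (𝓝[S] x ×ˢ 𝓝 w) (𝓝 (H x w)) := by
      have := (hH (x, w) ⟨hx, mem_univ w⟩).tendsto
      rwa [nhdsWithin_prod_eq, nhdsWithin_univ] at this
    have hright : Tendsto (fun p : X × Circle ↦ H x p.2) (𝓝[S] x ×ˢ 𝓝 w) (𝓝 (H x w)) :=
      (hxc.tendsto w).comp tendsto_snd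
    exact (hleft.sub hright).norm.eventually_lt hright.norm (by simpa using hne x hx w)
  refine ⟨k, ?_⟩
  filter_upwards [hclose, self_mem_nhdsWithin] with x' hlt hx'
  exact hk.of_norm_sub_lt (hcont x' hx') hlt

theorem hasWinding_zero_of_continuousOn_closedBall {f : ℂ → ℂ} {c : ℂ} {r : ℝ} (hr : 0 ≤ r)
    (hf : ContinuousOn f (Metric.closedBall c r)) (hne : ∀ z ∈ Metric.closedBall c r, f z ≠ 0) :
    HasWinding (fun w : Circle ↦ f (c + r * w)) 0 := by
  have hmem : ∀ s ∈ Icc (0 : ℝ) r, ∀ w : Circle, c + s * w ∈ Metric.closedBall c r :=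
    fun s hs w ↦ by simpa [abs_of_nonneg hs.1, Circle.norm_coe] using hs.2
  obtain ⟨k, hk⟩ := exists_forall_hasWinding
    (H := fun (s : ℝ) w ↦ f (c + s * w)) isPreconnected_Icc
    (hf.comp (f := fun p : ℝ × Circle ↦ c + p.1 * p.2) (by fun_prop) fun p hp ↦ hmem _ hp.1 _)
    fun s hs w ↦ hne _ (hmem s hs w)
  have hconst : HasWinding (fun _ ↦ f c) k := by simpa using hk 0 (left_mem_Icc.2 hr)
  obtain rfl := hconst.unique (HasWinding.const (hne c (Metric.mem_closedBall_self hr)))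
  exact hk r (right_mem_Icc.2 hr)

end Winding

section LocalDegree

/-- The local degree of `f` at `z₀`: on all small circles about `z₀`, the curve `f - f z₀` winds
`k` times around the origin. In particular `f` does not take the value `f z₀` again near `z₀`. -/
def HasLocalDegree (f : ℂ → ℂ) (z₀ : ℂ) (k : ℤ) : Prop :=
  ∀ᶠ r : ℝ in 𝓝[>] 0, HasWinding (fun w ↦ f (z₀ + r * w) - f z₀) k

theorem eventually_forall_circle {z₀ : ℂ} {p : ℂ → Prop} (hp : ∀ᶠ z in 𝓝[≠] z₀, p z) :
    ∀ᶠ r : ℝ in 𝓝[>] 0, ∀ w : Circle, p (z₀ + r * w) := by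
  obtain ⟨ε, hε, hball⟩ := Metric.mem_nhdsWithin_iff.1 hp
  filter_upwards [Ioo_mem_nhdsGT hε] with r hr w
  refine hball ⟨?_, ?_⟩
  · simpa [abs_of_pos hr.1, Circle.norm_coe] using hr.2
  · simpa using hr.1.ne'

namespace HasLocalDegree

variable {f f₁ f₂ : ℂ → ℂ} {z₀ : ℂ} {k l : ℤ}

theorem congr (h : HasLocalDegree f₁ z₀ k) (heq : f₁ =ᶠ[𝓝 z₀] f₂) : HasLocalDegree f₂ z₀ k := by
  filter_upwards [h, eventually_forall_circle (heq.filter_mono nhdsWithin_le_nhds)] with r hr hcirc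
  simpa only [hcirc, heq.self_of_nhds] using hr

theorem unique (h₁ : HasLocalDegree f z₀ k) (h₂ : HasLocalDegree f z₀ l) : k = l := by
  obtain ⟨r, hk, hl⟩ := (h₁.and h₂).exists
  exact hk.unique hl

theorem conjugate (h : HasLocalDegree f z₀ k) : HasLocalDegree (fun z ↦ conj (f z)) z₀ (-k) :=
  h.mono fun r hr ↦ by simpa only [map_sub] using hr.conjugate

theorem of_norm_sub_lt (h : HasLocalDegree f₁ z₀ k) (hf₂ : ∀ᶠ z in 𝓝[≠] z₀, ContinuousAt f₂ z)
    (hlt : ∀ᶠ z in 𝓝[≠] z₀, ‖(f₂ z - f₂ z₀) - (f₁ z - f₁ z₀)‖ < ‖f₁ z - f₁ z₀‖) :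
    HasLocalDegree f₂ z₀ k := by
  filter_upwards [h, eventually_forall_circle hf₂, eventually_forall_circle hlt] with r hr hc hlt
  refine hr.of_norm_sub_lt (continuous_iff_continuousAt.2 fun w ↦ ?_) hlt
  exact ((hc w).comp (f := fun w : Circle ↦ z₀ + r * w) (by fun_prop)).sub continuousAt_const

theorem const_mul_sub_pow {c : ℂ} (hc : c ≠ 0) {m : ℕ} (hm : m ≠ 0) :
    HasLocalDegree (fun z ↦ c * (z - z₀) ^ m) z₀ m := by
  filter_upwards [self_mem_nhdsWithin] with r hr
  have hr₀ : (r : ℂ) ≠ 0 := Complex.ofReal_ne_zero.2 (ne_of_gt hr)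
  simpa [hm, mul_pow, mul_assoc] using
    (HasWinding.const (mul_ne_zero hc (pow_ne_zero m hr₀))).mul (HasWinding.pow m)

theorem eventually_exists_eq {ι : Type*} {L : Filter ι} [L.NeBot] {F : ι → ℂ → ℂ} {U : Set ℂ}
    (h : HasLocalDegree f z₀ k) (hk : k ≠ 0) (hU : U ∈ 𝓝 z₀) (hF : ∀ i, ContinuousOn (F i) U)
    (hconv : TendstoLocallyUniformlyOn F f L U) : ∀ᶠ i in L, ∃ z ∈ U, F i z = f z₀ := by
  obtain ⟨ε, hε, hball⟩ := Metric.nhds_basis_closedBall.mem_iff.1 hU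
  obtain ⟨r, hr, hrε⟩ := (h.and (Ioo_mem_nhdsGT hε)).exists
  have hrU : Metric.closedBall z₀ r ⊆ U :=
    (Metric.closedBall_subset_closedBall hrε.2.le).trans hball
  have hcircle : ∀ w : Circle, z₀ + r * w ∈ Metric.closedBall z₀ r := fun w ↦ by
    simp [abs_of_pos hrε.1, Circle.norm_coe]
  obtain ⟨w₀, -, hmin⟩ := isCompact_univ.exists_isMinOn univ_nonempty
    hr.continuous.norm.continuousOn
  have hunif : TendstoUniformlyOn F f L (Metric.closedBall z₀ r) :=
    (tendstoLocallyUniformlyOn_iff_tendstoUniformlyOn_of_compact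
      (isCompact_closedBall z₀ r)).1 (hconv.mono hrU)
  filter_upwards [Metric.tendstoUniformlyOn_iff.1 hunif _ (norm_pos_iff.2 (hr.ne_zero w₀))]
    with i hi
  by_contra! hne
  have hcont : ContinuousOn (fun z ↦ F i z - f z₀) (Metric.closedBall z₀ r) :=
    ((hF i).mono hrU).sub continuousOn_const
  have hzero := hasWinding_zero_of_continuousOn_closedBall hrε.1.le hcont
    fun z hz ↦ sub_ne_zero.2 (hne z (hrU hz))
  refine hk ((hr.of_norm_sub_lt hzero.continuous fun w ↦ ?_).unique hzero)
  rw [sub_sub_sub_cancel_right, ← dist_eq_norm, dist_comm]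
  exact (hi _ (hcircle w)).trans_le (hmin (mem_univ w))

end HasLocalDegree

theorem exists_sub_eq_pow_succ_mul {h : ℂ → ℂ} {z₀ : ℂ} (hh : AnalyticAt ℂ h z₀)
    (hne : ∀ᶠ z in 𝓝[≠] z₀, h z ≠ h z₀) :
    ∃ (n : ℕ) (u : ℂ → ℂ), AnalyticAt ℂ u z₀ ∧ u z₀ ≠ 0 ∧
      ∀ᶠ z in 𝓝 z₀, h z - h z₀ = (z - z₀) ^ (n + 1) * u z := by
  obtain ⟨m, u, hu, hu₀, heq⟩ :=
    (hh.sub analyticAt_const).exists_eventuallyEq_pow_smul_nonzero_iff.2 fun h0 ↦ by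
      obtain ⟨z, hz, hz'⟩ := (hne.and (h0.filter_mono nhdsWithin_le_nhds)).exists
      exact hz (sub_eq_zero.1 hz')
  cases m with
  | zero => exact absurd heq.self_of_nhds.symm (by simpa using hu₀)
  | succ n => exact ⟨n, u, hu, hu₀, heq⟩

theorem exists_pos_hasLocalDegree_of_analyticAt {h : ℂ → ℂ} {z₀ : ℂ} (hh : AnalyticAt ℂ h z₀)
    (hne : ∀ᶠ z in 𝓝[≠] z₀, h z ≠ h z₀) : ∃ k : ℤ, 0 < k ∧ HasLocalDegree h z₀ k := by
  obtain ⟨n, u, hu, hu₀, heq⟩ := exists_sub_eq_pow_succ_mul hh hne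
  refine ⟨(n + 1 : ℕ), by positivity,
    (HasLocalDegree.const_mul_sub_pow hu₀ n.succ_ne_zero).of_norm_sub_lt
      (hh.eventually_analyticAt.filter_mono nhdsWithin_le_nhds |>.mono fun z ↦ (·.continuousAt)) ?_⟩
  have hclose : ∀ᶠ z in 𝓝 z₀, ‖u z - u z₀‖ < ‖u z₀‖ :=
    (hu.continuousAt.sub_const (u z₀)).norm.eventually_lt continuousAt_const (by simpa using hu₀)
  filter_upwards [heq.filter_mono nhdsWithin_le_nhds, hclose.filter_mono nhdsWithin_le_nhds,
    self_mem_nhdsWithin] with z hz hlt hzne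
  have hpos : 0 < ‖(z - z₀) ^ (n + 1)‖ := norm_pos_iff.2 (pow_ne_zero _ (sub_ne_zero.2 hzne))
  rw [hz, sub_self, zero_pow n.succ_ne_zero, mul_zero, sub_zero, mul_comm _ (u z), ← sub_mul,
    norm_mul, norm_mul]
  exact mul_lt_mul_of_pos_right hlt hpos

theorem exists_forall_hasLocalDegree_of_injOn {f : ℂ → ℂ} {U : Set ℂ} (hU : IsOpen U)
    (hUc : IsPreconnected U) (hf : ContinuousOn f U) (hinj : InjOn f U) :
    ∃ k, ∀ z ∈ U, HasLocalDegree f z k := by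
  refine exists_forall_of_eventually_nhdsWithin hUc (fun z _ k l ↦ HasLocalDegree.unique)
    fun z hz ↦ ?_
  obtain ⟨ε, hε, hball⟩ := Metric.isOpen_iff.1 hU z hz
  have hS : IsPreconnected (Metric.ball z (ε / 2) ×ˢ Ioo (0 : ℝ) (ε / 2)) :=
    (convex_ball z _).isPreconnected.prod isPreconnected_Ioo
  have hmem : ∀ p ∈ Metric.ball z (ε / 2) ×ˢ Ioo (0 : ℝ) (ε / 2), ∀ w : Circle,
      p.1 + p.2 * w ∈ U := fun p hp w ↦ hball <| by
    have hdist : dist (p.1 + p.2 * w) p.1 < ε / 2 := by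
      simpa [abs_of_pos hp.2.1, Circle.norm_coe] using hp.2.2
    rw [Metric.mem_ball]
    linarith [dist_triangle (p.1 + p.2 * w) p.1 z, Metric.mem_ball.1 hp.1]
  have hcenter : ∀ x ∈ Metric.ball z (ε / 2), x ∈ U := fun x hx ↦
    hball (Metric.ball_subset_ball (by linarith) hx)
  obtain ⟨k, hk⟩ := exists_forall_hasWinding hS
    (H := fun p w ↦ f (p.1 + p.2 * w) - f p.1)
    ((hf.comp (f := fun q : (ℂ × ℝ) × Circle ↦ q.1.1 + q.1.2 * q.2) (by fun_prop)
      fun q hq ↦ hmem q.1 hq.1 q.2).sub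
      (hf.comp (f := fun q : (ℂ × ℝ) × Circle ↦ q.1.1) (by fun_prop)
        fun q hq ↦ hcenter _ hq.1.1))
    fun p hp w ↦ sub_ne_zero.2 fun heq ↦ by
      simpa [hp.2.1.ne'] using hinj (hmem p hp w) (hcenter _ hp.1) heq
  refine ⟨k, nhdsWithin_le_nhds ?_⟩
  filter_upwards [Metric.ball_mem_nhds z (half_pos hε)] with x hx
  filter_upwards [Ioo_mem_nhdsGT (half_pos hε)] with r hr
  exact hk (x, r) ⟨hx, hr⟩

theorem injOn_of_tendstoLocallyUniformlyOn {ι : Type*} {L : Filter ι} [L.NeBot]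
    {F : ι → ℂ → ℂ} {f : ℂ → ℂ} {U : Set ℂ} (hU : IsOpen U) (hF : ∀ i, ContinuousOn (F i) U)
    (hinj : ∀ i, InjOn (F i) U) (hconv : TendstoLocallyUniformlyOn F f L U)
    (hdeg : ∀ z ∈ U, ∃ k, k ≠ 0 ∧ HasLocalDegree f z k) : InjOn f U := by
  intro a ha b hb hab
  by_contra hne
  obtain ⟨V, W, hV, hW, haV, hbW, hdisj⟩ := t2_separation hne
  have hattained : ∀ z ∈ U, ∀ V, IsOpen V → z ∈ V → ∀ᶠ i in L, ∃ x ∈ U ∩ V, F i x = f z := by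
    intro z hz V hV hzV
    obtain ⟨k, hk, hdeg⟩ := hdeg z hz
    exact hdeg.eventually_exists_eq hk ((hU.inter hV).mem_nhds ⟨hz, hzV⟩)
      (fun i ↦ (hF i).mono inter_subset_left) (hconv.mono inter_subset_left)
  obtain ⟨i, ⟨x, hx, hxa⟩, ⟨y, hy, hyb⟩⟩ :=
    ((hattained a ha V hV haV).and (hattained b hb W hW hbW)).exists
  exact hdisj.ne_of_mem hx.2 hy.2 (hinj i hx.1 hy.1 (by rw [hxa, hyb, hab]))

end LocalDegree

section Dilatation

theorem eventually_eq_of_eventually_deriv_eq_zero {𝕜 E : Type*} [RCLike 𝕜] [NormedAddCommGroup E]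
    [NormedSpace 𝕜 E] {f : 𝕜 → E} {x₀ : 𝕜} (hf : ∀ᶠ x in 𝓝 x₀, DifferentiableAt 𝕜 f x)
    (hf' : ∀ᶠ x in 𝓝 x₀, deriv f x = 0) : ∀ᶠ x in 𝓝 x₀, f x = f x₀ := by
  obtain ⟨ε, hε, hball⟩ := Metric.eventually_nhds_iff_ball.1 (hf.and hf')
  filter_upwards [Metric.ball_mem_nhds x₀ hε] with x hx
  exact Metric.isOpen_ball.is_const_of_deriv_eq_zero (Metric.isPreconnected_ball)
    (fun y hy ↦ (hball y hy).1.differentiableWithinAt) (fun y hy ↦ (hball y hy).2) hx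
    (Metric.mem_ball_self hε)

theorem deriv_isBigO_pow_and_pow_succ_isBigO_sub {h : ℂ → ℂ} {z₀ : ℂ} (hh : AnalyticAt ℂ h z₀)
    (hne : ∀ᶠ z in 𝓝[≠] z₀, h z ≠ h z₀) :
    ∃ n : ℕ, (deriv h =O[𝓝 z₀] fun z ↦ ‖z - z₀‖ ^ n) ∧
      (fun z ↦ ‖z - z₀‖ ^ (n + 1)) =O[𝓝 z₀] fun z ↦ h z - h z₀ := by
  obtain ⟨n, u, hu, hu₀, heq⟩ := exists_sub_eq_pow_succ_mul hh hne
  refine ⟨n, ?_, ?_⟩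
  · have hderiv : deriv h =ᶠ[𝓝 z₀]
        fun z ↦ (z - z₀) ^ n * ((n + 1) * u z + (z - z₀) * deriv u z) := by
      have hd : deriv h =ᶠ[𝓝 z₀] deriv fun z ↦ h z₀ + (z - z₀) ^ (n + 1) * u z :=
        EventuallyEq.deriv (heq.mono fun z hz ↦ by linear_combination hz)
      filter_upwards [hd, hu.eventually_analyticAt] with z hz huz
      have hpow : HasDerivAt (fun z ↦ (z - z₀) ^ (n + 1)) ((n + 1 : ℕ) * (z - z₀) ^ n) z := by
        simpa using ((hasDerivAt_id z).sub_const z₀).fun_pow (n + 1)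
      rw [hz, ((hpow.fun_mul huz.differentiableAt.hasDerivAt).const_add (h z₀)).deriv]
      push_cast
      ring
    have hbdd : (fun z ↦ (n + 1) * u z + (z - z₀) * deriv u z) =O[𝓝 z₀] fun _ ↦ (1 : ℝ) := by
      have hu' := hu.deriv.continuousAt
      have hu := hu.continuousAt
      exact Tendsto.isBigO_one ℝ (ContinuousAt.tendsto (by fun_prop))
    refine hderiv.trans_isBigO ?_
    simpa using (Asymptotics.isBigO_refl (fun z ↦ (z - z₀) ^ n) (𝓝 z₀)).norm_right.mul hbdd
  · have hone : (fun _ ↦ (1 : ℝ)) =O[𝓝 z₀] u :=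
      (Asymptotics.isBigO_const_left_iff_pos_le_norm one_ne_zero).2
        ⟨‖u z₀‖ / 2, by positivity, (hu.continuousAt.norm.eventually_const_le
          (half_lt_self (norm_pos_iff.2 hu₀)))⟩
    have hprod := (Asymptotics.isBigO_refl (fun z ↦ (z - z₀) ^ (n + 1)) (𝓝 z₀)).norm_left.mul hone
    simpa using hprod.trans_eventuallyEq (heq.mono fun z hz ↦ hz.symm)

theorem sub_sub_mul_sub_isLittleO {h g a : ℂ → ℂ} {z₀ : ℂ} (hh : AnalyticAt ℂ h z₀)
    (hg : AnalyticAt ℂ g z₀) (hne : ∀ᶠ z in 𝓝[≠] z₀, h z ≠ h z₀) (ha : ContinuousAt a z₀)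
    (hdil : ∀ᶠ z in 𝓝 z₀, deriv g z = a z * deriv h z) :
    (fun z ↦ g z - g z₀ - a z₀ * (h z - h z₀)) =o[𝓝 z₀] fun z ↦ h z - h z₀ := by
  obtain ⟨n, hderiv, hpow⟩ := deriv_isBigO_pow_and_pow_succ_isBigO_sub hh hne
  obtain ⟨ε, hε, hball⟩ := Metric.eventually_nhds_iff_ball.1
    (hh.eventually_analyticAt.and hg.eventually_analyticAt)
  have hlittle : deriv (fun z ↦ g z - a z₀ * h z) =o[𝓝 z₀] fun z ↦ ‖z - z₀‖ ^ n := by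
    have heq : deriv (fun z ↦ g z - a z₀ * h z) =ᶠ[𝓝 z₀] fun z ↦ (a z - a z₀) * deriv h z := by
      filter_upwards [hdil, hh.eventually_analyticAt, hg.eventually_analyticAt] with z hz hhz hgz
      rw [deriv_fun_sub hgz.differentiableAt (hhz.differentiableAt.const_mul _),
        deriv_const_mul _ hhz.differentiableAt, hz, sub_mul]
    have ha₀ : (fun z ↦ a z - a z₀) =o[𝓝 z₀] fun _ ↦ (1 : ℝ) :=
      (Asymptotics.isLittleO_one_iff ℝ).2 (by simpa using ha.tendsto.sub_const (a z₀))
    simpa using heq.trans_isLittleO (ha₀.mul_isBigO hderiv)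
  have hmean := (convex_ball z₀ ε).isLittleO_pow_succ (n := n)
    (f := fun z ↦ g z - a z₀ * h z)
    (f' := fun z ↦ (ContinuousLinearMap.toSpanSingleton ℂ
      (deriv (fun z ↦ g z - a z₀ * h z) z)).restrictScalars ℝ)
    (Metric.mem_ball_self hε)
    (fun z hz ↦ (((hball z hz).2.differentiableAt.sub
      ((hball z hz).1.differentiableAt.const_mul _)).hasDerivAt.hasFDerivAt.restrictScalars
        ℝ).hasFDerivWithinAt)
    ((Asymptotics.isLittleO_norm_left.1 (by simpa using hlittle.norm_left)).mono
      nhdsWithin_le_nhds)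
  rw [Metric.isOpen_ball.nhdsWithin_eq (Metric.mem_ball_self hε)] at hmean
  exact (hmean.trans_isBigO hpow).congr_left fun z ↦ by ring

theorem exists_pos_hasLocalDegree_of_norm_dilatation_lt_one {h g a : ℂ → ℂ} {z₀ : ℂ}
    (hh : AnalyticAt ℂ h z₀) (hg : AnalyticAt ℂ g z₀) (hne : ∀ᶠ z in 𝓝[≠] z₀, h z ≠ h z₀)
    (ha : ContinuousAt a z₀) (ha₁ : ‖a z₀‖ < 1)
    (hdil : ∀ᶠ z in 𝓝 z₀, deriv g z = a z * deriv h z) :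
    ∃ k : ℤ, 0 < k ∧ HasLocalDegree (fun z ↦ h z + conj (g z)) z₀ k := by
  obtain ⟨k, hk, hdeg⟩ := exists_pos_hasLocalDegree_of_analyticAt hh hne
  refine ⟨k, hk, hdeg.of_norm_sub_lt ?_ ?_⟩
  · filter_upwards [hh.eventually_analyticAt.filter_mono nhdsWithin_le_nhds,
      hg.eventually_analyticAt.filter_mono nhdsWithin_le_nhds] with z hhz hgz
    exact hhz.continuousAt.add (Complex.continuous_conj.continuousAt.comp hgz.continuousAt)
  · have hsmall := (sub_sub_mul_sub_isLittleO hh hg hne ha hdil).bound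
      (half_pos (sub_pos.2 ha₁))
    filter_upwards [hsmall.filter_mono nhdsWithin_le_nhds, hne] with z hz hzne
    have hpos : 0 < ‖h z - h z₀‖ := norm_pos_iff.2 (sub_ne_zero.2 hzne)
    calc ‖(h z + conj (g z)) - (h z₀ + conj (g z₀)) - (h z - h z₀)‖
        = ‖g z - g z₀‖ := by
          rw [← Complex.norm_conj (g z - g z₀), map_sub]
          congr 1
          ring
      _ ≤ ‖g z - g z₀ - a z₀ * (h z - h z₀)‖ + ‖a z₀ * (h z - h z₀)‖ := norm_le_norm_sub_add _ _
      _ ≤ (1 - ‖a z₀‖) / 2 * ‖h z - h z₀‖ + ‖a z₀‖ * ‖h z - h z₀‖ := by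
          rw [norm_mul]
          gcongr
      _ < ‖h z - h z₀‖ := by nlinarith

theorem exists_eventually_im_mul_eq_of_deriv_eq_mul {h g : ℂ → ℂ} {z₀ c : ℂ}
    (hh : AnalyticAt ℂ h z₀) (hg : AnalyticAt ℂ g z₀) (hc : ‖c‖ = 1)
    (hderiv : ∀ᶠ z in 𝓝 z₀, deriv g z = c * deriv h z) :
    ∃ q : ℂ, q ≠ 0 ∧
      ∀ᶠ z in 𝓝 z₀, (q * (h z + conj (g z))).im = (q * (h z₀ + conj (g z₀))).im := by
  obtain ⟨q, rfl⟩ := IsAlgClosed.exists_pow_nat_eq c two_pos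
  have hq : q * conj q = 1 := by
    rw [norm_pow, pow_eq_one_iff_of_nonneg (norm_nonneg q) two_ne_zero] at hc
    simp [Complex.mul_conj, Complex.normSq_eq_norm_sq, hc]
  refine ⟨q, left_ne_zero_of_mul_eq_one hq, ?_⟩
  have hconst : ∀ᶠ z in 𝓝 z₀, g z - q ^ 2 * h z = g z₀ - q ^ 2 * h z₀ := by
    refine eventually_eq_of_eventually_deriv_eq_zero (f := fun z ↦ g z - q ^ 2 * h z)
      ((hg.sub (analyticAt_const.mul hh)).eventually_analyticAt.mono
        fun z ↦ (·.differentiableAt)) ?_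
    filter_upwards [hderiv, hh.eventually_analyticAt, hg.eventually_analyticAt] with z hz hhz hgz
    rw [deriv_fun_sub hgz.differentiableAt (hhz.differentiableAt.const_mul _),
      deriv_const_mul _ hhz.differentiableAt, hz, sub_self]
  filter_upwards [hconst] with z hz
  have hreal : q * (h z + conj (g z)) - q * (h z₀ + conj (g z₀)) =
      q * (h z - h z₀) + conj (q * (h z - h z₀)) := by
    have hg' : g z - g z₀ = q ^ 2 * (h z - h z₀) := by linear_combination hz
    have hg_conj := congrArg conj hg'
    simp only [map_sub, map_mul, map_pow] at hg_conj ⊢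
    linear_combination q * hg_conj + conj q * (conj (h z) - conj (h z₀)) * hq
  rw [← sub_eq_zero, ← Complex.sub_im, hreal, Complex.add_im, Complex.conj_im, add_neg_cancel]

theorem exists_analyticAt_eventually_eq_mul_of_norm_le {G H : ℂ → ℂ} {z₀ : ℂ}
    (hG : AnalyticAt ℂ G z₀) (hH : AnalyticAt ℂ H z₀) (hle : ∀ᶠ z in 𝓝 z₀, ‖G z‖ ≤ ‖H z‖) :
    ∃ a : ℂ → ℂ, AnalyticAt ℂ a z₀ ∧ (∀ᶠ z in 𝓝 z₀, ‖a z‖ ≤ 1) ∧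
      ∀ᶠ z in 𝓝 z₀, G z = a z * H z := by
  obtain h0 | hne := hH.eventually_eq_zero_or_eventually_ne_zero
  · refine ⟨0, analyticAt_const, by simp, ?_⟩
    filter_upwards [hle, h0] with z hz hz0
    simpa [hz0] using hz
  obtain ⟨s, hs, hso, hz₀⟩ := eventually_nhds_iff.1 <| (hG.eventually_analyticAt.and
    (hH.eventually_analyticAt.and hle)).and (eventually_nhdsWithin_iff.1 hne)
  let q : ℂ → ℂ := fun z ↦ G z / H z
  have hq : ∀ z ∈ s \ {z₀}, ‖q z‖ ≤ 1 := fun z hz ↦ by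
    rw [norm_div]
    exact div_le_one_of_le₀ (hs z hz.1).1.2.2 (norm_nonneg _)
  have ha : AnalyticAt ℂ (Function.update q z₀ (limUnder (𝓝[≠] z₀) q)) z₀ :=
    (Complex.differentiableOn_update_limUnder_of_bddAbove (hso.mem_nhds hz₀)
      (fun z hz ↦ ((hs z hz.1).1.1.differentiableAt.div (hs z hz.1).1.2.1.differentiableAt
        ((hs z hz.1).2 hz.2)).differentiableWithinAt)
      ⟨1, forall_mem_image.2 hq⟩).analyticAt (hso.mem_nhds hz₀)
  have hmem : ∀ᶠ z in 𝓝[≠] z₀, z ∈ s \ {z₀} :=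
    sdiff_mem_nhdsWithin_compl (hso.mem_nhds hz₀) _
  have hbdd : ∀ᶠ z in 𝓝[≠] z₀, ‖Function.update q z₀ (limUnder (𝓝[≠] z₀) q) z‖ ≤ 1 :=
    hmem.mono fun z hz ↦ by simpa [Function.update_of_ne hz.2] using hq z hz
  refine ⟨_, ha, ?_, ?_⟩
  · have hlim := le_of_tendsto (ha.continuousAt.norm.tendsto.mono_left nhdsWithin_le_nhds) hbdd
    filter_upwards [eventually_nhdsWithin_iff.1 hbdd] with z hz
    by_cases h : z = z₀
    exacts [h ▸ hlim, hz h]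
  · refine (hG.continuousAt.eventuallyEq_nhds_iff_eventuallyEq_nhdsNE
      (ha.continuousAt.mul hH.continuousAt)).1 (hmem.mono fun z hz ↦ ?_)
    simp [Function.update_of_ne hz.2, q, div_mul_cancel₀ _ ((hs z hz.1).2 hz.2)]

theorem exists_pos_hasLocalDegree_or_exists_eventually_im_mul_eq {h g : ℂ → ℂ} {z₀ : ℂ}
    (hh : AnalyticAt ℂ h z₀) (hg : AnalyticAt ℂ g z₀)
    (hle : ∀ᶠ z in 𝓝 z₀, ‖deriv g z‖ ≤ ‖deriv h z‖) :
    (∃ k : ℤ, 0 < k ∧ HasLocalDegree (fun z ↦ h z + conj (g z)) z₀ k) ∨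
      ∃ q : ℂ, q ≠ 0 ∧
        ∀ᶠ z in 𝓝 z₀, (q * (h z + conj (g z))).im = (q * (h z₀ + conj (g z₀))).im := by
  obtain hconst | hne := hh.eventually_eq_or_eventually_ne (analyticAt_const (v := h z₀))
  · refine .inr (exists_eventually_im_mul_eq_of_deriv_eq_mul hh hg norm_one ?_)
    filter_upwards [hle, hconst.eventually_nhds] with z hz hc
    have hderiv : deriv h z = 0 := by
      rw [EventuallyEq.deriv_eq hc, deriv_const]
    simpa [hderiv] using hz
  obtain ⟨a, ha, ha₁, hdil⟩ := exists_analyticAt_eventually_eq_mul_of_norm_le hg.deriv hh.deriv hle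
  obtain hlt | heq := ha₁.self_of_nhds.lt_or_eq
  · exact .inl (exists_pos_hasLocalDegree_of_norm_dilatation_lt_one hh hg hne ha.continuousAt hlt
      hdil)
  · refine .inr (exists_eventually_im_mul_eq_of_deriv_eq_mul hh hg heq ?_)
    have hmax : IsLocalMax (norm ∘ a) z₀ := ha₁.mono fun z hz ↦ hz.trans_eq heq.symm
    filter_upwards [hdil, Complex.eventually_eq_of_isLocalMax_norm
      (ha.eventually_analyticAt.mono fun z ↦ (·.differentiableAt)) hmax] with z hz haz
    rw [hz, haz]

theorem norm_deriv_le_of_hasLocalDegree {h g : ℂ → ℂ} {z₀ : ℂ} {k : ℤ} (hh : AnalyticAt ℂ h z₀)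
    (hg : AnalyticAt ℂ g z₀) (hdeg : HasLocalDegree (fun z ↦ h z + conj (g z)) z₀ k)
    (hk : 0 ≤ k) : ‖deriv g z₀‖ ≤ ‖deriv h z₀‖ := by
  by_contra! hlt
  -- Exchanging `h` and `g` conjugates the mapping, so its local degree would be negative.
  have hg₀ : deriv g z₀ ≠ 0 := norm_pos_iff.1 ((norm_nonneg _).trans_lt hlt)
  have ha : ContinuousAt (fun z ↦ deriv h z / deriv g z) z₀ :=
    hh.deriv.continuousAt.div hg.deriv.continuousAt hg₀
  obtain ⟨l, hl, hdeg'⟩ := exists_pos_hasLocalDegree_of_norm_dilatation_lt_one hg hh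
    (hg.differentiableAt.hasDerivAt.eventually_ne hg₀) ha
    (by rwa [norm_div, div_lt_one (norm_pos_iff.2 hg₀)])
    ((hg.deriv.continuousAt.eventually_ne hg₀).mono fun z hz ↦ (div_mul_cancel₀ _ hz).symm)
  have hkl : k = -l := hdeg.unique (by simpa [add_comm] using hdeg'.conjugate)
  lia

end Dilatation

section Harmonic

/-- A canonical decomposition `f = h + conj g` of the harmonic mapping `f` on `U`: both `h` and `g`
are holomorphic on `U`. -/
structure IsHarmonicDecomposition (f h g : ℂ → ℂ) (U : Set ℂ) : Prop where
  differentiableOn_left : DifferentiableOn ℂ h U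
  differentiableOn_right : DifferentiableOn ℂ g U
  eqOn : EqOn f (fun z ↦ h z + conj (g z)) U

theorem HarmonicOn.harmonicOnNhd {u : ℂ → ℂ} {s : Set ℂ} (hu : HarmonicOn u s) (hs : IsOpen s) :
    HarmonicOnNhd u s := fun z hz ↦ by
  refine ⟨hu.1.contDiffAt (hs.mem_nhds hz), ?_⟩
  filter_upwards [hs.mem_nhds hz] with y hy
  rw [laplacian_eq_iteratedFDeriv_complexPlane]
  exact hu.2 y hy

namespace IsHarmonicDecomposition

variable {f h g : ℂ → ℂ} {U : Set ℂ}

theorem harmonicOnNhd (hf : IsHarmonicDecomposition f h g U) (hU : IsOpen U) :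
    HarmonicOnNhd f U := fun _ hz ↦
  (harmonicAt_congr_nhds (hf.eqOn.eventuallyEq_of_mem (hU.mem_nhds hz))).2 <|
    (hf.differentiableOn_left.analyticAt (hU.mem_nhds hz)).harmonicAt.add
      (hf.differentiableOn_right.analyticAt (hU.mem_nhds hz)).harmonicAt_conj

theorem of_tendsto {ι : Type*} {L : Filter ι} [L.NeBot] {F hn gn : ι → ℂ → ℂ} (hU : IsOpen U)
    (hF : ∀ i, IsHarmonicDecomposition (F i) (hn i) (gn i) U)
    (hf : ∀ z ∈ U, Tendsto (fun i ↦ F i z) L (𝓝 (f z)))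
    (hh : TendstoLocallyUniformlyOn hn h L U) (hg : TendstoLocallyUniformlyOn gn g L U) :
    IsHarmonicDecomposition f h g U where
  differentiableOn_left :=
    hh.differentiableOn (.of_forall fun i ↦ (hF i).differentiableOn_left) hU
  differentiableOn_right :=
    hg.differentiableOn (.of_forall fun i ↦ (hF i).differentiableOn_right) hU
  eqOn z hz := by
    refine tendsto_nhds_unique (hf z hz) ?_
    have hlim := (hh.tendsto_at hz).add
      ((Complex.continuous_conj.tendsto _).comp (hg.tendsto_at hz))
    exact hlim.congr fun i ↦ ((hF i).eqOn hz).symm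

end IsHarmonicDecomposition

theorem norm_le_of_re_le_of_mem_ball_half {A : ℂ → ℂ} {c z : ℂ} {R M : ℝ}
    (hA : DifferentiableOn ℂ A (Metric.ball c R)) (hM : 0 < M)
    (hre : ∀ z ∈ Metric.ball c R, (A z).re ≤ M) (hz : z ∈ Metric.ball c (R / 2)) :
    ‖A z‖ ≤ 2 * M + 3 * ‖A c‖ := by
  rw [mem_ball_iff_norm] at hz
  have hmaps : MapsTo (fun z ↦ c + z) (Metric.ball 0 R) (Metric.ball c R) := fun z hz ↦ by
    simpa using hz
  have hR : 0 < R := by linarith [norm_nonneg (z - c)]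
  have hden : 0 < R - ‖z - c‖ := by linarith
  have hbound := Complex.borelCaratheodory (z := z - c) hM (hA.comp (by fun_prop) hmaps)
    (fun w hw ↦ hre _ (hmaps hw)) hR (by rw [mem_ball_zero_iff]; linarith)
  simp only [Function.comp_apply, add_sub_cancel, add_zero, mul_div_assoc] at hbound
  refine hbound.trans (add_le_add ?_ ?_)
  · exact mul_le_of_le_one_right (by positivity) ((div_le_one hden).2 (by linarith))
  · rw [mul_comm]
    exact mul_le_mul_of_nonneg_right ((div_le_iff₀ hden).2 (by linarith)) (norm_nonneg _)

theorem exists_tendstoUniformlyOn_of_re {ι : Type*} {L : Filter ι} [L.NeBot] {A : ι → ℂ → ℂ}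
    {v : ℂ → ℝ} {c : ℂ} {R : ℝ} (hA : ∀ i, DifferentiableOn ℂ (A i) (Metric.ball c R))
    (hc : ∀ i, (A i c).im = 0)
    (hv : TendstoUniformlyOn (fun i z ↦ (A i z).re) v L (Metric.ball c R)) :
    ∃ B : ℂ → ℂ, TendstoUniformlyOn A B L (Metric.ball c (R / 2)) := by
  have hcauchy : UniformCauchySeqOn A L (Metric.ball c (R / 2)) := by
    intro s hs
    obtain ⟨ε, hε, hεs⟩ := Metric.mem_uniformity_dist.1 hs
    have hδ : 0 < ε / 6 := by positivity
    filter_upwards [hv.uniformCauchySeqOn _ (Metric.dist_mem_uniformity hδ)] with m hm z hz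
    have hsub : ∀ z ∈ Metric.ball c R, |(A m.1 z - A m.2 z).re| ≤ ε / 6 := fun z hz ↦ by
      simpa only [Complex.sub_re, Real.dist_eq] using (hm z hz).le
    have hR : 0 < R := by linarith [Metric.pos_of_mem_ball hz]
    have hcenter : ‖A m.1 c - A m.2 c‖ ≤ ε / 6 := by
      rw [← Complex.abs_re_eq_norm.2 (by simp [hc])]
      exact hsub c (Metric.mem_ball_self hR)
    have hbound := norm_le_of_re_le_of_mem_ball_half ((hA m.1).sub (hA m.2)) hδ
      (fun w hw ↦ (le_abs_self _).trans (hsub w hw)) hz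
    simp only [Pi.sub_apply] at hbound
    refine hεs ?_
    rw [dist_eq_norm]
    linarith
  have hlim : ∀ z ∈ Metric.ball c (R / 2), ∃ b, Tendsto (fun i ↦ A i z) L (𝓝 b) := fun z hz ↦
    cauchy_map_iff_exists_tendsto.1 (hcauchy.cauchy_map hz)
  choose! B hB using hlim
  exact ⟨B, hcauchy.tendstoUniformlyOn_of_tendsto hB⟩

theorem exists_tendstoUniformlyOn_re_eq {ι : Type*} {L : Filter ι} [L.NeBot] {u : ι → ℂ → ℝ}
    {v : ℂ → ℝ} {c : ℂ} {R : ℝ} (hu : ∀ i, HarmonicOnNhd (u i) (Metric.ball c R))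
    (hv : TendstoUniformlyOn u v L (Metric.ball c R)) :
    ∃ (A : ι → ℂ → ℂ) (B : ℂ → ℂ), (∀ i, DifferentiableOn ℂ (A i) (Metric.ball c R)) ∧
      (∀ i, EqOn (fun z ↦ (A i z).re) (u i) (Metric.ball c R)) ∧
      TendstoUniformlyOn A B L (Metric.ball c (R / 2)) := by
  choose A hA hre using fun i ↦ (hu i).exists_analyticOnNhd_ball_re_eq
  have hA' : ∀ i, DifferentiableOn ℂ (fun z ↦ A i z - (A i c).im * Complex.I) (Metric.ball c R) :=
    fun i ↦ (hA i).differentiableOn.sub_const _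
  have hre' : ∀ i, EqOn (fun z ↦ (A i z - (A i c).im * Complex.I).re) (u i) (Metric.ball c R) :=
    fun i z hz ↦ by simpa using hre i hz
  obtain ⟨B, hB⟩ := exists_tendstoUniformlyOn_of_re hA' (fun i ↦ by simp)
    (hv.congr (.of_forall fun i ↦ (hre' i).symm))
  exact ⟨_, B, hA', hre', hB⟩

theorem exists_isHarmonicDecomposition_tendstoUniformlyOn {ι : Type*} {L : Filter ι} [L.NeBot]
    {F : ι → ℂ → ℂ} {f : ℂ → ℂ} {U : Set ℂ} (hU : IsOpen U) (hF : ∀ i, HarmonicOnNhd (F i) U)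
    (hconv : TendstoLocallyUniformlyOn F f L U) {z₀ : ℂ} (hz₀ : z₀ ∈ U) :
    ∃ (V : Set ℂ) (hn gn : ι → ℂ → ℂ) (h g : ℂ → ℂ), IsOpen V ∧ z₀ ∈ V ∧ V ⊆ U ∧
      (∀ i, IsHarmonicDecomposition (F i) (hn i) (gn i) V) ∧
      TendstoUniformlyOn hn h L V ∧ TendstoUniformlyOn gn g L V ∧
      IsHarmonicDecomposition f h g V := by
  obtain ⟨R, hR, hball⟩ := Metric.nhds_basis_closedBall.mem_iff.1 (hU.mem_nhds hz₀)
  have hunif : TendstoUniformlyOn F f L (Metric.ball z₀ R) :=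
    ((tendstoLocallyUniformlyOn_iff_tendstoUniformlyOn_of_compact
      (isCompact_closedBall z₀ R)).1 (hconv.mono hball)).mono Metric.ball_subset_closedBall
  have hharm : ∀ i, HarmonicOnNhd (F i) (Metric.ball z₀ R) := fun i ↦
    (hF i).mono (Metric.ball_subset_closedBall.trans hball)
  obtain ⟨A, A', hA, hAre, hAconv⟩ := exists_tendstoUniformlyOn_re_eq
    (fun i ↦ (hharm i).comp_CLM Complex.reCLM)
    (Complex.reCLM.uniformContinuous.comp_tendstoUniformlyOn hunif)
  obtain ⟨B, B', hB, hBre, hBconv⟩ := exists_tendstoUniformlyOn_re_eq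
    (fun i ↦ (hharm i).comp_CLM Complex.imCLM)
    (Complex.imCLM.uniformContinuous.comp_tendstoUniformlyOn hunif)
  have hhalf : Metric.ball z₀ (R / 2) ⊆ Metric.ball z₀ R :=
    Metric.ball_subset_ball (half_le_self hR.le)
  have hmul : ∀ (a : ℂ) {X : ι → ℂ → ℂ} {Y : ℂ → ℂ} {V : Set ℂ}, TendstoUniformlyOn X Y L V →
      TendstoUniformlyOn (fun i z ↦ a * X i z) (fun z ↦ a * Y z) L V :=
    fun a ↦ (uniformContinuous_id.const_mul' a).comp_tendstoUniformlyOn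
  have hh := (hmul (1 / 2) hAconv).add (hmul (Complex.I / 2) hBconv)
  have hg := (hmul (1 / 2) hAconv).sub (hmul (Complex.I / 2) hBconv)
  have hdecomp : ∀ i, IsHarmonicDecomposition (F i) (fun z ↦ 1 / 2 * A i z + Complex.I / 2 * B i z)
      (fun z ↦ 1 / 2 * A i z - Complex.I / 2 * B i z) (Metric.ball z₀ (R / 2)) := by
    refine fun i ↦ ⟨?_, ?_, fun z hz ↦ ?_⟩
    · exact (((hA i).const_mul _).add ((hB i).const_mul _)).mono hhalf
    · exact (((hA i).const_mul _).sub ((hB i).const_mul _)).mono hhalf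
    · have hre : (A i z).re = (F i z).re := hAre i (hhalf hz)
      have him : (B i z).re = (F i z).im := hBre i (hhalf hz)
      apply Complex.ext <;> simp [Complex.div_re, Complex.div_im, Complex.normSq] <;> linarith
  exact ⟨_, _, _, _, _, Metric.isOpen_ball, Metric.mem_ball_self (half_pos hR),
    hhalf.trans (Metric.ball_subset_closedBall.trans hball), hdecomp, hh, hg,
    .of_tendsto Metric.isOpen_ball hdecomp (fun z hz ↦ hunif.tendsto_at (hhalf hz))
      hh.tendstoLocallyUniformlyOn hg.tendstoLocallyUniformlyOn⟩

theorem collinear_image_iff {f : ℂ → ℂ} {U : Set ℂ} :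
    Collinear ℝ (f '' U) ↔ ∃ p q : ℂ, ∀ z ∈ U, ∃ t : ℝ, f z = p + t * q := by
  simp only [collinear_iff_exists_forall_eq_smul_vadd, forall_mem_image, vadd_eq_add,
    Complex.real_smul, add_comm]

theorem collinear_image_of_conj {f : ℂ → ℂ} {U : Set ℂ}
    (h : Collinear ℝ ((fun z ↦ conj (f z)) '' U)) : Collinear ℝ (f '' U) := by
  obtain ⟨p, q, hpq⟩ := collinear_image_iff.1 h
  refine collinear_image_iff.2 ⟨conj p, conj q, fun z hz ↦ (hpq z hz).imp fun t ht ↦ ?_⟩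
  rw [← Complex.conj_conj (f z), ht, map_add, map_mul, Complex.conj_ofReal]

theorem collinear_image_of_eventually_im_mul_eq {f : ℂ → ℂ} {U : Set ℂ}
    (hf : HarmonicOnNhd f U) (hU : IsPreconnected U) {z₀ q : ℂ} (hz₀ : z₀ ∈ U) (hq : q ≠ 0)
    (him : ∀ᶠ z in 𝓝 z₀, (q * f z).im = (q * f z₀).im) : Collinear ℝ (f '' U) := by
  have hanalytic : AnalyticOnNhd ℝ (fun z ↦ (q * f z).im) U := fun z hz ↦
    HarmonicAt.analyticAt
      ((hf z hz).comp_CLM (Complex.imCLM ∘L ContinuousLinearMap.mul ℝ ℂ q))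
  have heq : EqOn (fun z ↦ (q * f z).im) (fun _ ↦ (q * f z₀).im) U :=
    hanalytic.eqOn_of_preconnected_of_eventuallyEq analyticOnNhd_const hU hz₀ him
  refine collinear_image_iff.2 ⟨f z₀, q⁻¹, fun z hz ↦ ⟨(q * (f z - f z₀)).re, ?_⟩⟩
  have hreal : ((q * (f z - f z₀)).re : ℂ) = q * (f z - f z₀) :=
    Complex.conj_eq_iff_re.1 (Complex.conj_eq_iff_im.2 (by
      rw [mul_sub, Complex.sub_im, sub_eq_zero]
      exact heq hz))
  rw [hreal]
  field_simp
  ring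

end Harmonic

section Limit

variable {ι : Type*} {L : Filter ι} [L.NeBot] {U : Set ℂ} {F : ι → ℂ → ℂ} {f : ℂ → ℂ}

theorem harmonicOnNhd_of_tendstoLocallyUniformlyOn (hU : IsOpen U)
    (hF : ∀ i, HarmonicOnNhd (F i) U) (hconv : TendstoLocallyUniformlyOn F f L U) :
    HarmonicOnNhd f U := fun z hz ↦ by
  obtain ⟨V, _, _, h, g, hV, hzV, -, -, -, -, hf⟩ :=
    exists_isHarmonicDecomposition_tendstoUniformlyOn hU hF hconv hz
  exact hf.harmonicOnNhd hV z hzV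

theorem exists_pos_hasLocalDegree_of_tendstoLocallyUniformlyOn (hU : IsOpen U)
    (hUc : IsPreconnected U) (hF : ∀ i, HarmonicOnNhd (F i) U)
    (hconv : TendstoLocallyUniformlyOn F f L U)
    (hdeg : ∃ᶠ i in L, ∀ z ∈ U, ∃ k, 0 ≤ k ∧ HasLocalDegree (F i) z k)
    (hnl : ¬ Collinear ℝ (f '' U)) {z : ℂ} (hz : z ∈ U) :
    ∃ k, 0 < k ∧ HasLocalDegree f z k := by
  obtain ⟨V, hn, gn, h, g, hV, hzV, hVU, hdecomp, hh, hg, hf⟩ :=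
    exists_isHarmonicDecomposition_tendstoUniformlyOn hU hF hconv hz
  have hle_n : ∃ᶠ i in L, ∀ y ∈ V, ‖deriv (gn i) y‖ ≤ ‖deriv (hn i) y‖ := by
    refine hdeg.mono fun i hi y hy ↦ ?_
    obtain ⟨k, hk, hdeg⟩ := hi y (hVU hy)
    have hVy := hV.mem_nhds hy
    exact norm_deriv_le_of_hasLocalDegree ((hdecomp i).differentiableOn_left.analyticAt hVy)
      ((hdecomp i).differentiableOn_right.analyticAt hVy)
      (hdeg.congr ((hdecomp i).eqOn.eventuallyEq_of_mem hVy)) hk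
  have hle : ∀ y ∈ V, ‖deriv g y‖ ≤ ‖deriv h y‖ := fun y hy ↦
    le_of_tendsto_of_tendsto_of_frequently
      ((hg.tendstoLocallyUniformlyOn.deriv
        (.of_forall fun i ↦ (hdecomp i).differentiableOn_right) hV).tendsto_at hy).norm
      ((hh.tendstoLocallyUniformlyOn.deriv
        (.of_forall fun i ↦ (hdecomp i).differentiableOn_left) hV).tendsto_at hy).norm
      (hle_n.mono fun i hi ↦ hi y hy)
  have hVz := hV.mem_nhds hzV
  have heq := hf.eqOn.eventuallyEq_of_mem hVz
  rcases exists_pos_hasLocalDegree_or_exists_eventually_im_mul_eq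
    (hf.differentiableOn_left.analyticAt hVz) (hf.differentiableOn_right.analyticAt hVz)
    (eventually_of_mem hVz hle) with ⟨k, hk, hdeg⟩ | ⟨q, hq, him⟩
  · exact ⟨k, hk, hdeg.congr heq.symm⟩
  · refine absurd (collinear_image_of_eventually_im_mul_eq
      (harmonicOnNhd_of_tendstoLocallyUniformlyOn hU hF hconv) hUc hz hq ?_) hnl
    filter_upwards [heq, him] with y hy hy_im
    rw [hy, heq.self_of_nhds, hy_im]

theorem limit_univalent_general (hU : IsOpen U) (hUc : IsPreconnected U)
    (hF : ∀ i, HarmonicOnNhd (F i) U) (hinj : ∀ i, InjOn (F i) U)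
    (hconv : TendstoLocallyUniformlyOn F f L U) (hnl : ¬ Collinear ℝ (f '' U)) : InjOn f U := by
  have hcont : ∀ i, ContinuousOn (F i) U := fun i z hz ↦
    (hF i z hz).1.continuousAt.continuousWithinAt
  choose k hk using fun i ↦ exists_forall_hasLocalDegree_of_injOn hU hUc (hcont i) (hinj i)
  refine injOn_of_tendstoLocallyUniformlyOn hU hcont hinj hconv fun z hz ↦ ?_
  have hsign : ∃ᶠ i in L, 0 ≤ k i ∨ k i ≤ 0 := .of_forall fun i ↦ le_total 0 (k i)
  rcases frequently_or_distrib.1 hsign with hpos | hneg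
  · obtain ⟨l, hl, hdeg⟩ := exists_pos_hasLocalDegree_of_tendstoLocallyUniformlyOn hU hUc hF hconv
      (hpos.mono fun i hi y hy ↦ ⟨k i, hi, hk i y hy⟩) hnl hz
    exact ⟨l, hl.ne', hdeg⟩
  · obtain ⟨l, hl, hdeg⟩ := exists_pos_hasLocalDegree_of_tendstoLocallyUniformlyOn
      (f := fun z ↦ conj (f z)) hU hUc
      (fun i ↦ (hF i).comp_CLM Complex.conjCLE.toContinuousLinearMap)
      (Complex.conjLIE.isometry.uniformContinuous.comp_tendstoLocallyUniformlyOn hconv)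
      (hneg.mono fun i hi y hy ↦ ⟨-k i, neg_nonneg.2 hi, (hk i y hy).conjugate⟩)
      (mt collinear_image_of_conj hnl) hz
    exact ⟨-l, neg_ne_zero.2 hl.ne', by simpa only [Complex.conj_conj] using hdeg.conjugate⟩

end Limit

/-- Hengartner–Schober limit theorem applied to `w = P[F]`: a locally uniform limit of
univalent harmonic maps onto `D` which is nonconstant and whose image lies on no line
is univalent. -/
theorem limit_univalent (D : Set ℂ) (hDo : IsOpen D) (hDb : Bornology.IsBounded D)
    (hDne : D.Nonempty) (hDc : IsConnected D)
    (F : ℝ → ℂ) (hF : Continuous F) (hFper : ∀ t, F (t + 2 * π) = F t)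
    (hFsurj : F '' univ = frontier D)
    (wn : ℕ → ℂ → ℂ)
    (hharm : ∀ n, HarmonicOn (wn n) (Metric.ball 0 1))
    (huniv : ∀ n, Set.InjOn (wn n) (Metric.ball 0 1))
    (himg : ∀ n, wn n '' Metric.ball 0 1 = D)
    (hconv : TendstoLocallyUniformlyOn wn (poissonExt F) atTop (Metric.ball 0 1))
    (hnc : ¬ ∃ c : ℂ, ∀ z ∈ Metric.ball (0:ℂ) 1, poissonExt F z = c)
    (hnl : ¬ ∃ p q : ℂ, ∀ z ∈ Metric.ball (0:ℂ) 1, ∃ t : ℝ, poissonExt F z = p + (t:ℂ) * q) :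
    Set.InjOn (poissonExt F) (Metric.ball 0 1) :=
  limit_univalent_general Metric.isOpen_ball (convex_ball 0 1).isPreconnected
    (fun n ↦ (hharm n).harmonicOnNhd Metric.isOpen_ball) huniv hconv (mt collinear_image_iff.1 hnl)
end

section
/- Let F : 𝕋 → γ be an orientation-preserving C¹ diffeomorphism onto a simple closed curve γ = ∂D for a bounded domain D, and suppose w = P[F] extends to a C¹ map on the closed unit disk. If the boundary Jacobian satisfies J_w(ζ) > 0 for every ζ ∈ 𝕋, then w is a diffeomorphism of the open unit disk onto D. -/
open MeasureTheory Set Real Filter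

/-- The Jacobian determinant of `w : ℂ → ℂ` viewed as a map `ℝ² → ℝ²`. -/
noncomputable def Jac (w : ℂ → ℂ) (z : ℂ) : ℝ :=
  LinearMap.det (fderiv ℝ w z : ℂ →ₗ[ℝ] ℂ)

/-!
Along the circle, positivity of the Jacobian means `|∂W/∂z̄| < |∂W/∂z|`, so that `i ζ ∂W/∂z` stays
within a right angle of the tangent vector `F'` of the boundary curve. By Hopf's Umlaufsatz the
tangent of a simple closed curve makes `±1` turns, hence `∂W/∂z` winds `0` or `-2` times around the
origin. As `W` is harmonic in the disk, `∂W/∂z` is holomorphic there and its winding number counts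
its zeros: it is `0`, and `∂W/∂z` has no zeros. The maximum principle for the holomorphic quotient
of the conjugate of `∂W/∂z̄` by `∂W/∂z` now carries `|∂W/∂z̄| < |∂W/∂z|` into the disk.

Consequently `W` is a local homeomorphism at every point of the closed disk and is injective on the
circle, hence on a collar of it. The collar shows on which side of `∂D` the values of `W` lie and
yields `W(𝔻) = D`. The set of values in `D` taken at least twice is both open and closed in `D`.
If it were all of `D`, then by compactness the boundary points would be taken twice as well, against
injectivity on the circle; hence it is empty.

The Umlaufsatz is proved as Hopf did: the logarithm of the tangent is extended continuously to the
chords `F (s + h) - F s`, and the turning is read off at a lowest point of the curve, where all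
chords point upwards.
-/

open Metric
open scoped Topology ComplexConjugate

section Topology

variable {X Y : Type*} [TopologicalSpace X] [TopologicalSpace Y]

theorem subset_of_disjoint_frontier {s t : Set X} (hs : IsPreconnected s)
    (hst : (s ∩ t).Nonempty) (hd : Disjoint s (frontier t)) : s ⊆ t := by
  have hcover : s ⊆ interior t ∪ (closure t)ᶜ := fun x hx =>
    or_iff_not_imp_right.2 fun hxt => by_contra fun h => hd.le_bot ⟨hx, not_not.1 hxt, h⟩
  have hdisj : Disjoint (interior t) (closure t)ᶜ :=
    disjoint_compl_right.mono_left (interior_subset.trans subset_closure)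
  obtain ⟨x, hxs, hxt⟩ := hst
  rcases hs.subset_or_subset isOpen_interior isClosed_closure.isOpen_compl hdisj hcover with h | h
  · exact h.trans interior_subset
  · exact absurd (subset_closure hxt) (h hxs)

theorem subset_closure_of_eventually [PreconnectedSpace X] [NoncompactSpace X] {P Q : Set X}
    (hP : IsCompact (closure P))
    (h : ∀ x ∈ frontier P ∪ frontier Q, ∀ᶠ y in 𝓝 x, y ∈ P → y ∈ closure Q) :
    P ⊆ closure Q := by
  rw [← sdiff_eq_empty]
  by_contra hne
  have huniv : P \ closure Q ≠ univ := fun hG =>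
    noncompact_univ X (hP.of_isClosed_subset isClosed_univ
      (hG.symm.subset.trans (sdiff_subset.trans subset_closure)))
  obtain ⟨x, hx⟩ := nonempty_frontier_iff.2 ⟨nonempty_iff_ne_empty.2 hne, huniv⟩
  have hxPQ : x ∈ frontier P ∪ frontier Q := by
    rcases frontier_inter_subset P (closure Q)ᶜ hx with hx | hx
    · exact Or.inl hx.1
    · exact Or.inr (frontier_closure_subset (frontier_compl (closure Q) ▸ hx.2))
  obtain ⟨y, hy, hyP, hyQ⟩ := mem_closure_iff_nhds.1 (frontier_subset_closure hx) _ (h x hxPQ)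
  exact hyQ (hy hyP)

theorem exists_mem_nhds_injOn {f : X → Y} {s : Set X} (hf : IsLocalHomeomorphOn f s) {x : X}
    (hx : x ∈ s) : ∃ u ∈ 𝓝 x, InjOn f u := by
  obtain ⟨e, hxe, rfl⟩ := hf x hx
  exact ⟨e.source, e.open_source.mem_nhds hxe, e.injOn⟩

theorem isOpen_image_of_isLocalHomeomorphOn {f : X → Y} {u : Set X}
    (hf : IsLocalHomeomorphOn f u) (hu : IsOpen u) : IsOpen (f '' u) := by
  rw [isOpen_iff_mem_nhds]
  rintro _ ⟨x, hx, rfl⟩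
  rw [← hf.map_nhds_eq hx]
  exact image_mem_map (hu.mem_nhds hx)

theorem frontier_image_subset [T2Space Y] {f : X → Y} {u : Set X} (hfc : ContinuousOn f (closure u))
    (hf : IsLocalHomeomorphOn f u) (hu : IsOpen u) (hc : IsCompact (closure u)) :
    frontier (f '' u) ⊆ f '' frontier u := by
  rw [(isOpen_image_of_isLocalHomeomorphOn hf hu).frontier_eq,
    ← image_closure_of_isCompact hc hfc, hu.frontier_eq]
  rintro _ ⟨⟨x, hx, rfl⟩, hxu⟩
  exact ⟨x, ⟨hx, fun h => hxu (mem_image_of_mem f h)⟩, rfl⟩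

/-- The values that `f` takes at two different points of `s`: they obstruct injectivity on `s`. -/
def doubleValues (f : X → Y) (s : Set X) : Set Y :=
  {y | ∃ a ∈ s, ∃ b ∈ s, a ≠ b ∧ f a = y ∧ f b = y}

theorem isCompact_doubleValues [T2Space X] [T2Space Y] {f : X → Y} {s : Set X}
    (hf : IsLocalHomeomorphOn f s) (hs : IsCompact s) : IsCompact (doubleValues f s) := by
  let R : Set (X × X) := {x | x ∈ s ×ˢ s ∧ f x.1 = f x.2 ∧ x.1 ≠ x.2}
  have hRs : R ⊆ s ×ˢ s := fun x hx => hx.1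
  have hR : IsClosed R := by
    refine isClosed_of_closure_subset fun x hx => ?_
    have hxs : x ∈ s ×ˢ s := closure_minimal hRs (hs.prod hs).isClosed hx
    have hfreq : ∃ᶠ y in 𝓝 x, y ∈ R := mem_closure_iff_frequently.1 hx
    refine ⟨hxs, by_contra fun hne => hfreq ?_, fun heq => hfreq ?_⟩
    · have h₁ : ContinuousAt (fun y : X × X => f y.1) x :=
        (hf.continuousAt hxs.1).comp continuousAt_fst
      have h₂ : ContinuousAt (fun y : X × X => f y.2) x :=
        (hf.continuousAt hxs.2).comp continuousAt_snd
      filter_upwards [(h₁.ne_iff_eventually_ne h₂).1 hne] with y hy hyR using hy hyR.2.1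
    · obtain ⟨u, hu, hinj⟩ := exists_mem_nhds_injOn hf hxs.1
      filter_upwards [prod_mem_nhds hu (heq ▸ hu)] with y hy hyR using
        hyR.2.2 (hinj hy.1 hy.2 hyR.2.1)
  have himage : (fun x : X × X => f x.1) '' R = doubleValues f s := by
    ext y
    constructor
    · rintro ⟨⟨a, b⟩, ⟨⟨ha, hb⟩, h, hab⟩, rfl⟩
      exact ⟨a, ha, b, hb, hab, rfl, h.symm⟩
    · rintro ⟨a, ha, b, hb, hab, rfl, h⟩
      exact ⟨(a, b), ⟨⟨ha, hb⟩, h.symm, hab⟩, rfl⟩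
  rw [← himage]
  exact ((hs.prod hs).of_isClosed_subset hR hRs).image_of_continuousOn
    (hf.continuousOn.comp continuousOn_fst fun x hx => hx.1.1)

theorem isOpen_doubleValues [T2Space X] {f : X → Y} {u : Set X} (hf : IsLocalHomeomorphOn f u)
    (hu : IsOpen u) : IsOpen (doubleValues f u) := by
  rw [isOpen_iff_mem_nhds]
  rintro _ ⟨a, ha, b, hb, hab, rfl, hba⟩
  obtain ⟨v, w, hv, hw, hav, hbw, hvw⟩ := t2_separation hab
  have hva : f '' (v ∩ u) ∈ 𝓝 (f a) :=
    hf.map_nhds_eq ha ▸ image_mem_map ((hv.inter hu).mem_nhds ⟨hav, ha⟩)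
  have hwb : f '' (w ∩ u) ∈ 𝓝 (f a) :=
    hba ▸ hf.map_nhds_eq hb ▸ image_mem_map ((hw.inter hu).mem_nhds ⟨hbw, hb⟩)
  filter_upwards [hva, hwb] with _ ⟨x, hx, hxy⟩ ⟨y, hy, hyx⟩
  exact ⟨x, hx.2, y, hy.2, hvw.ne_of_mem hx.1 hy.1, hxy, hyx⟩

theorem injOn_of_injOn_frontier [T2Space X] [T2Space Y] {f : X → Y} {u : Set X}
    (hf : IsLocalHomeomorphOn f (closure u)) (hu : IsOpen u) (hpre : IsPreconnected u)
    (hc : IsCompact (closure u)) (hne : (frontier u).Nonempty) (hinj : InjOn f (frontier u))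
    (hd : Disjoint (f '' u) (f '' frontier u)) : InjOn f u := by
  have hfu : IsLocalHomeomorphOn f u := fun x hx => hf x (subset_closure hx)
  have hcl : closure u = u ∪ frontier u := closure_eq_self_union_frontier u
  have hmem_u : ∀ x ∈ closure u, f x ∈ f '' u → x ∈ u := fun x hx hfx =>
    (hcl ▸ hx).resolve_right fun h => disjoint_left.1 hd hfx (mem_image_of_mem f h)
  have hmem_fr : ∀ x ∈ closure u, f x ∈ f '' frontier u → x ∈ frontier u := fun x hx hfx =>
    (hcl ▸ hx).resolve_left fun h => disjoint_left.1 hd (mem_image_of_mem f h) hfx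
  have hclosed : IsClosed (doubleValues f (closure u)) := (isCompact_doubleValues hf hc).isClosed
  have hmono : doubleValues f u ⊆ doubleValues f (closure u) :=
    fun _ ⟨a, ha, b, hb, h⟩ => ⟨a, subset_closure ha, b, subset_closure hb, h⟩
  intro a ha b hb hab
  by_contra hne_ab
  have hsub : f '' u ⊆ doubleValues f u := by
    refine subset_of_disjoint_frontier (hpre.image f hfu.continuousOn)
      ⟨f a, mem_image_of_mem f ha, a, ha, b, hb, hne_ab, rfl, hab.symm⟩ ?_
    rw [(isOpen_doubleValues hfu hu).frontier_eq, disjoint_left]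
    rintro y hy ⟨hy', hyn⟩
    obtain ⟨x, hx, x', hx', hxx', rfl, hfx'⟩ := closure_minimal hmono hclosed hy'
    exact hyn ⟨x, hmem_u x hx hy, x', hmem_u x' hx' (hfx' ▸ hy), hxx', rfl, hfx'⟩
  obtain ⟨ζ, hζ⟩ := hne
  have hfζ : f ζ ∈ closure (f '' u) := hf.continuousOn.image_closure
    (mem_image_of_mem f (frontier_subset_closure hζ))
  obtain ⟨x, hx, x', hx', hxx', hfx, hfx'⟩ := closure_minimal (hsub.trans hmono) hclosed hfζ
  exact hxx' (hinj (hmem_fr x hx ⟨ζ, hζ, hfx.symm⟩) (hmem_fr x' hx' ⟨ζ, hζ, hfx'.symm⟩)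
    (hfx.trans hfx'.symm))

end Topology

section Disk

/-- The open annulus of inner radius `a` and outer radius `b` centred at the origin. -/
def annulus (a b : ℝ) : Set ℂ := norm ⁻¹' Ioo a b

theorem isOpen_annulus (a b : ℝ) : IsOpen (annulus a b) := isOpen_Ioo.preimage continuous_norm

theorem isPreconnected_annulus {a : ℝ} (ha : 0 ≤ a) (b : ℝ) : IsPreconnected (annulus a b) := by
  have himage : (fun p : ℝ × ℝ => circleMap 0 p.1 p.2) '' Ioo a b ×ˢ univ = annulus a b := by
    ext z
    constructor
    · rintro ⟨⟨r, t⟩, ⟨hr, -⟩, rfl⟩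
      simpa [annulus, abs_of_pos (ha.trans_lt hr.1)] using hr
    · exact fun hz => ⟨(‖z‖, Complex.arg z), ⟨hz, mem_univ _⟩, by simp [circleMap]⟩
  rw [← himage]
  exact (isPreconnected_Ioo.prod isPreconnected_univ).image _ (by unfold circleMap; fun_prop)

theorem exists_annulus_subset_of_mem_nhdsSet_sphere {t : Set ℂ} (ht : t ∈ 𝓝ˢ (sphere (0 : ℂ) 1)) :
    ∃ ε ∈ Ioc (0 : ℝ) 1, annulus (1 - ε) (1 + ε) ⊆ t := by
  have hsphere : sphere (0 : ℂ) 1 = norm ⁻¹' {1} := by ext; simp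
  have hclosed : IsClosedMap (norm : ℂ → ℝ) := by simpa using isClosedMap_dist (0 : ℂ)
  rw [hsphere, ← hclosed.comap_nhds_eq continuous_norm] at ht
  obtain ⟨ε, hε, hsub⟩ := ((nhds_basis_Ioo_pos (1 : ℝ)).comap norm).mem_iff.1 ht
  refine ⟨min ε 1, ⟨by positivity, min_le_right _ _⟩, Subset.trans (preimage_mono ?_) hsub⟩
  gcongr <;> exact min_le_left _ _

variable {W : ℂ → ℂ} {D : Set ℂ}

theorem exists_injOn_annulus (hloc : IsLocalHomeomorphOn W (sphere 0 1))
    (hinj : InjOn W (sphere 0 1)) :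
    ∃ ε ∈ Ioc (0 : ℝ) 1, InjOn W (annulus (1 - ε) (1 + ε)) := by
  obtain ⟨t, ht, htinj⟩ := hinj.exists_mem_nhdsSet (isCompact_sphere 0 1)
    (fun z hz => hloc.continuousAt hz) fun z hz => exists_mem_nhds_injOn hloc hz
  obtain ⟨ε, hε, hsub⟩ := exists_annulus_subset_of_mem_nhdsSet_sphere ht
  exact ⟨ε, hε, htinj.mono hsub⟩

theorem image_annulus_mem_nhds (hloc : IsLocalHomeomorphOn W (sphere 0 1)) {ε : ℝ} (hε : 0 < ε)
    {ζ : ℂ} (hζ : ζ ∈ sphere 0 1) : W '' annulus (1 - ε) (1 + ε) ∈ 𝓝 (W ζ) := by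
  rw [← hloc.map_nhds_eq hζ]
  refine image_mem_map ((isOpen_annulus _ _).mem_nhds ?_)
  simp [annulus, mem_sphere_zero_iff_norm.1 hζ, hε]

theorem disjoint_image_of_injOn_annulus {ε : ℝ} (hε : 0 < ε)
    (hinj : InjOn W (annulus (1 - ε) (1 + ε))) {s : Set ℂ} (hs : s ⊆ annulus (1 - ε) (1 + ε))
    (hd : Disjoint s (sphere 0 1)) : Disjoint (W '' s) (W '' sphere 0 1) := by
  refine disjoint_image_image fun x hx ζ hζ h => hd.ne_of_mem hx hζ (hinj (hs hx) ?_ h)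
  simp [annulus, mem_sphere_zero_iff_norm.1 hζ, hε]

theorem disjoint_image_outer_annulus (hW : Continuous W) (hloc : IsLocalHomeomorphOn W (sphere 0 1))
    {ε : ℝ} (hε : 0 < ε) (hinj : InjOn W (annulus (1 - ε) (1 + ε))) {K : Set ℂ} (hK : IsCompact K)
    (hWK : W '' closedBall 0 1 ⊆ K) (hfr : frontier K ⊆ W '' sphere 0 1) :
    Disjoint (W '' annulus 1 (1 + ε)) K := by
  have hne : K.Nonempty := ((nonempty_closedBall.2 zero_le_one).image W).mono hWK
  obtain ⟨q, hq⟩ := nonempty_frontier_iff.2 ⟨hne, hK.ne_univ⟩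
  obtain ⟨ζ, hζ, rfl⟩ := hfr hq
  obtain ⟨_, ⟨z, hz, rfl⟩, hzK⟩ := mem_closure_iff_nhds.1
    (frontier_subset_closure (frontier_compl K ▸ hq)) _ (image_annulus_mem_nhds hloc hε hζ)
  have hz1 : 1 < ‖z‖ := by
    by_contra! h
    exact hzK (hWK (mem_image_of_mem W (mem_closedBall_zero_iff.2 h)))
  have houter : annulus 1 (1 + ε) ⊆ annulus (1 - ε) (1 + ε) :=
    preimage_mono (Ioo_subset_Ioo_left (by linarith))
  have hsphere : Disjoint (annulus 1 (1 + ε)) (sphere 0 1) :=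
    disjoint_left.2 fun x hx hx1 => hx.1.ne' (mem_sphere_zero_iff_norm.1 hx1)
  refine subset_compl_iff_disjoint_right.1 (subset_of_disjoint_frontier
    ((isPreconnected_annulus zero_le_one _).image W hW.continuousOn)
    ⟨W z, mem_image_of_mem W ⟨hz1, hz.2⟩, hzK⟩ ?_)
  rw [frontier_compl]
  exact (disjoint_image_of_injOn_annulus hε hinj houter hsphere).mono_right hfr

theorem image_inner_annulus_subset (hW : Continuous W) (hloc : IsLocalHomeomorphOn W (sphere 0 1))
    {ε : ℝ} (hε : ε ∈ Ioc (0 : ℝ) 1) (hinj : InjOn W (annulus (1 - ε) (1 + ε))) (hDo : IsOpen D)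
    (hfr : W '' sphere 0 1 = frontier D) (hout : Disjoint (W '' annulus 1 (1 + ε)) D) :
    W '' annulus (1 - ε) 1 ⊆ D := by
  have hDfr : Disjoint D (frontier D) := (disjoint_frontier_iff_isOpen.2 hDo).symm
  have h1 : (1 : ℂ) ∈ sphere 0 1 := by simp
  obtain ⟨_, ⟨z, hz, rfl⟩, hzD⟩ := mem_closure_iff_nhds.1
    (frontier_subset_closure (hfr ▸ mem_image_of_mem W h1)) _ (image_annulus_mem_nhds hloc hε.1 h1)
  have hz1 : ‖z‖ < 1 := by
    refine lt_of_le_of_ne (not_lt.1 fun h => ?_) fun h => ?_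
    · exact disjoint_left.1 hout (mem_image_of_mem W ⟨h, hz.2⟩) hzD
    · exact disjoint_left.1 hDfr hzD
        (hfr ▸ mem_image_of_mem W (mem_sphere_zero_iff_norm.2 h))
  have hinner : annulus (1 - ε) 1 ⊆ annulus (1 - ε) (1 + ε) :=
    preimage_mono (Ioo_subset_Ioo_right (by linarith [hε.1]))
  have hsphere : Disjoint (annulus (1 - ε) 1) (sphere 0 1) :=
    disjoint_left.2 fun x hx hx1 => hx.2.ne (mem_sphere_zero_iff_norm.1 hx1)
  refine subset_of_disjoint_frontier
    ((isPreconnected_annulus (sub_nonneg.2 hε.2) _).image W hW.continuousOn)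
    ⟨W z, mem_image_of_mem W ⟨hz.1, hz1⟩, hzD⟩ ?_
  exact hfr ▸ disjoint_image_of_injOn_annulus hε.1 hinj hinner hsphere

theorem eventually_nhds_mem_of_annulus (hloc : IsLocalHomeomorphOn W (sphere 0 1))
    {ε : ℝ} (hε : 0 < ε) {P Q : Set ℂ} (hin : W '' annulus (1 - ε) 1 ⊆ Q)
    (hsphere : W '' sphere 0 1 ⊆ Q) (hout : Disjoint (W '' annulus 1 (1 + ε)) P) {q : ℂ}
    (hq : q ∈ W '' sphere 0 1) : ∀ᶠ y in 𝓝 q, y ∈ P → y ∈ Q := by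
  obtain ⟨ζ, hζ, rfl⟩ := hq
  filter_upwards [image_annulus_mem_nhds hloc hε hζ] with _ ⟨z, hz, hzy⟩ hyP
  subst hzy
  rcases lt_trichotomy ‖z‖ 1 with h | h | h
  · exact hin (mem_image_of_mem W ⟨hz.1, h⟩)
  · exact hsphere (mem_image_of_mem W (mem_sphere_zero_iff_norm.2 h))
  · exact absurd hyP (disjoint_left.1 hout (mem_image_of_mem W ⟨h, hz.2⟩))

theorem frontier_image_ball_subset (hW : Continuous W) (hloc : IsLocalHomeomorphOn W (ball 0 1)) :
    frontier (W '' ball 0 1) ⊆ W '' sphere 0 1 := by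
  rw [← frontier_ball (0 : ℂ) one_ne_zero]
  refine frontier_image_subset hW.continuousOn hloc isOpen_ball ?_
  rw [closure_ball (0 : ℂ) one_ne_zero]
  exact isCompact_closedBall 0 1

theorem closure_image_ball (hW : Continuous W) :
    closure (W '' ball 0 1) = W '' closedBall 0 1 := by
  have hc : IsCompact (closure (ball (0 : ℂ) 1)) := isBounded_ball.isCompact_closure
  rw [← closure_ball (0 : ℂ) one_ne_zero, image_closure_of_isCompact hc hW.continuousOn]

theorem exists_disjoint_image_outer_annulus (hW : Continuous W) (hDo : IsOpen D)
    (hDb : Bornology.IsBounded D) (hloc : IsLocalHomeomorphOn W (closedBall 0 1))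
    (hinj : InjOn W (sphere 0 1)) (hfr : W '' sphere 0 1 = frontier D) :
    ∃ ε > 0, W '' annulus (1 - ε) 1 ⊆ D ∧
      Disjoint (W '' annulus 1 (1 + ε)) (D ∪ W '' closedBall 0 1) := by
  have hlocb : IsLocalHomeomorphOn W (ball 0 1) := fun z hz => hloc z (ball_subset_closedBall hz)
  have hlocs : IsLocalHomeomorphOn W (sphere 0 1) :=
    fun z hz => hloc z (sphere_subset_closedBall hz)
  obtain ⟨ε, hε, hinjA⟩ := exists_injOn_annulus hlocs hinj
  let K := closure (D ∪ W '' ball 0 1)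
  have hWK : W '' closedBall 0 1 ⊆ K :=
    closure_image_ball hW ▸ closure_mono subset_union_right
  have hK : IsCompact K := by
    have hb : Bornology.IsBounded (W '' ball 0 1) :=
      ((isCompact_closedBall 0 1).image hW).isBounded.subset (image_mono ball_subset_closedBall)
    exact (hDb.union hb).isCompact_closure
  have hKfr : frontier K ⊆ W '' sphere 0 1 := by
    refine (frontier_closure_subset.trans (frontier_union_subset _ _)).trans (union_subset ?_ ?_)
    · exact inter_subset_left.trans hfr.superset
    · exact inter_subset_right.trans (frontier_image_ball_subset hW hlocb)
  have hout := disjoint_image_outer_annulus hW hlocs hε.1 hinjA hK hWK hKfr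
  have hDK : D ⊆ K := subset_union_left.trans subset_closure
  exact ⟨ε, hε.1, image_inner_annulus_subset hW hlocs hε hinjA hDo hfr (hout.mono_right hDK),
    hout.mono_right (union_subset hDK hWK)⟩

theorem disjoint_image_sphere_of_disjoint_image_outer_annulus (hW : Continuous W) {ε : ℝ}
    (hε : 0 < ε) {B : Set ℂ} (hB : IsOpen B) (hout : Disjoint (W '' annulus 1 (1 + ε)) B) :
    Disjoint B (W '' sphere 0 1) := by
  rw [disjoint_right]
  rintro _ ⟨ζ, hζ, rfl⟩ hζB
  have hζcl : ζ ∈ closure (closedBall 0 1)ᶜ := by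
    rw [← frontier_closedBall (0 : ℂ) one_ne_zero, ← frontier_compl] at hζ
    exact frontier_subset_closure hζ
  have hnhds : W ⁻¹' B ∩ ball 0 (1 + ε) ∈ 𝓝 ζ := by
    refine ((hB.preimage hW).inter isOpen_ball).mem_nhds ⟨hζB, ?_⟩
    rw [mem_ball_zero_iff, mem_sphere_zero_iff_norm.1 hζ]
    linarith
  obtain ⟨z, ⟨hzB, hz⟩, hz1⟩ := mem_closure_iff_nhds.1 hζcl _ hnhds
  have hzA : z ∈ annulus 1 (1 + ε) := ⟨by simpa using hz1, mem_ball_zero_iff.1 hz⟩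
  exact disjoint_left.1 hout (mem_image_of_mem W hzA) hzB

theorem image_ball_eq_of_isLocalHomeomorphOn (hW : Continuous W) (hDo : IsOpen D)
    (hDb : Bornology.IsBounded D) (hloc : IsLocalHomeomorphOn W (closedBall 0 1))
    (hinj : InjOn W (sphere 0 1)) (hfr : W '' sphere 0 1 = frontier D) : W '' ball 0 1 = D := by
  have hlocb : IsLocalHomeomorphOn W (ball 0 1) := fun z hz => hloc z (ball_subset_closedBall hz)
  have hlocs : IsLocalHomeomorphOn W (sphere 0 1) :=
    fun z hz => hloc z (sphere_subset_closedBall hz)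
  obtain ⟨ε, hε, hin, hout⟩ := exists_disjoint_image_outer_annulus hW hDo hDb hloc hinj hfr
  rw [disjoint_union_right] at hout
  set B := W '' ball 0 1
  have hBo : IsOpen B := isOpen_image_of_isLocalHomeomorphOn hlocb isOpen_ball
  have hBcl : closure B = W '' closedBall 0 1 := closure_image_ball hW
  have hBfr : frontier B ⊆ W '' sphere 0 1 := frontier_image_ball_subset hW hlocb
  have houtB : Disjoint (W '' annulus 1 (1 + ε)) B :=
    hout.2.mono_right (image_mono ball_subset_closedBall)
  have hBD : B ⊆ closure D := by
    refine subset_closure_of_eventually (hBcl ▸ (isCompact_closedBall 0 1).image hW) fun q hq => ?_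
    exact eventually_nhds_mem_of_annulus hlocs hε (hin.trans subset_closure)
      (hfr.subset.trans frontier_subset_closure) houtB (union_subset hBfr hfr.superset hq)
  have hDB : D ⊆ closure B := by
    refine subset_closure_of_eventually hDb.isCompact_closure fun q hq => ?_
    have hin' : annulus (1 - ε) 1 ⊆ ball 0 1 := fun z hz => mem_ball_zero_iff.2 hz.2
    exact eventually_nhds_mem_of_annulus hlocs hε ((image_mono hin').trans subset_closure)
      (hBcl ▸ image_mono sphere_subset_closedBall) hout.1
      (union_subset hfr.superset hBfr hq)
  have hBΓ : Disjoint B (W '' sphere 0 1) :=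
    disjoint_image_sphere_of_disjoint_image_outer_annulus hW hε hBo houtB
  have hDΓ : Disjoint D (W '' sphere 0 1) := hfr ▸ (disjoint_frontier_iff_isOpen.2 hDo).symm
  rw [closure_eq_self_union_frontier] at hBD hDB
  exact Subset.antisymm ((hBΓ.mono_right hfr.superset).subset_left_of_subset_union hBD)
    ((hDΓ.mono_right hBfr).subset_left_of_subset_union hDB)

theorem bijOn_ball_of_isLocalHomeomorphOn (hW : Continuous W) (hDo : IsOpen D)
    (hDb : Bornology.IsBounded D) (hloc : IsLocalHomeomorphOn W (closedBall 0 1))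
    (hinj : InjOn W (sphere 0 1)) (hfr : W '' sphere 0 1 = frontier D) :
    BijOn W (ball 0 1) D := by
  have himage : W '' ball 0 1 = D :=
    image_ball_eq_of_isLocalHomeomorphOn hW hDo hDb hloc hinj hfr
  have hfrb : frontier (ball (0 : ℂ) 1) = sphere 0 1 := frontier_ball 0 one_ne_zero
  have hclb : closure (ball (0 : ℂ) 1) = closedBall 0 1 := closure_ball 0 one_ne_zero
  have hinjb : InjOn W (ball 0 1) := by
    refine injOn_of_injOn_frontier (hclb ▸ hloc) isOpen_ball (convex_ball 0 1).isPreconnected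
      isBounded_ball.isCompact_closure ?_ (hfrb ▸ hinj) ?_
    · exact hfrb ▸ NormedSpace.sphere_nonempty.2 zero_le_one
    · rw [himage, hfrb, hfr]
      exact (disjoint_frontier_iff_isOpen.2 hDo).symm
  exact himage ▸ hinjb.bijOn_image

end Disk

section Poisson

theorem one_sub_two_mul_cos_add_sq_pos {r : ℝ} (hr : |r| < 1) (t : ℝ) :
    0 < 1 - 2 * r * Real.cos t + r ^ 2 := by
  have hcos : r * Real.cos t ≤ |r| :=
    (le_abs_self _).trans (by
      rw [abs_mul]
      exact mul_le_of_le_one_right (abs_nonneg r) (Real.abs_cos_le_one t))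
  have hsq : 0 < (1 - |r|) ^ 2 := pow_pos (sub_pos.2 hr) 2
  rw [sub_sq, sq_abs] at hsq
  linarith

theorem continuous_poissonKer {r : ℝ} (hr : |r| < 1) : Continuous (poissonKer r) := by
  unfold poissonKer
  refine Continuous.div (by fun_prop) (by fun_prop) fun t => ?_
  have := one_sub_two_mul_cos_add_sq_pos hr t
  positivity

theorem poissonKer_nonneg {r : ℝ} (hr : |r| < 1) (t : ℝ) : 0 ≤ poissonKer r t := by
  have hden := one_sub_two_mul_cos_add_sq_pos hr t
  have hnum : 0 ≤ 1 - r ^ 2 := sub_nonneg.2 ((sq_le_one_iff_abs_le_one r).2 hr.le)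
  unfold poissonKer
  positivity

theorem poissonKer_norm_sub_arg (z : ℂ) (t : ℝ) :
    poissonKer ‖z‖ (t - Complex.arg z) = (2 * π)⁻¹ * poissonKernel 0 z (circleMap 0 1 t) := by
  have hdist :
      ‖circleMap 0 1 t - z‖ ^ 2 = 1 - 2 * ‖z‖ * Real.cos (t - Complex.arg z) + ‖z‖ ^ 2 := by
    have hre := Complex.norm_mul_cos_arg z
    have him := Complex.norm_mul_sin_arg z
    have hn := Complex.sq_norm z
    rw [Complex.sq_norm, Complex.normSq_apply, hn, Complex.normSq_apply, Real.cos_sub]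
    simp only [circleMap, Complex.ofReal_one, one_mul, zero_add, Complex.sub_re, Complex.sub_im,
      Complex.exp_ofReal_mul_I_re, Complex.exp_ofReal_mul_I_im]
    linear_combination (Real.sin_sq_add_cos_sq t) + 2 * Real.cos t * hre + 2 * Real.sin t * him
  rw [poissonKer, poissonKernel_def, sub_zero, sub_zero, hdist, norm_circleMap_zero, abs_one,
    one_pow]
  field_simp

theorem poissonExt_comp_circleMap (g : ℂ → ℂ) (z : ℂ) :
    poissonExt (g ∘ circleMap 0 1) z = circleAverage (poissonKernel 0 z • g) 0 1 := by
  rw [poissonExt, circleAverage, ← intervalIntegral.integral_smul]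
  refine intervalIntegral.integral_congr fun t _ => ?_
  simp only [poissonKer_norm_sub_arg, Complex.ofReal_mul, Pi.smul_apply', Complex.real_smul,
    Function.comp_apply, mul_assoc]

theorem poissonExt_comp_circleMap_of_diffContOnCl {P : ℂ → ℂ} (hP : DiffContOnCl ℂ P (ball 0 1))
    {z : ℂ} (hz : z ∈ ball (0 : ℂ) 1) : poissonExt (P ∘ circleMap 0 1) z = P z :=
  (poissonExt_comp_circleMap P z).trans (hP.circleAverage_poissonKernel_smul hz)

theorem poissonExt_conj (F : ℝ → ℂ) (z : ℂ) :
    poissonExt (fun t => conj (F t)) z = conj (poissonExt F z) := by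
  rw [poissonExt, poissonExt, ← intervalIntegral.intervalIntegral_conj]
  simp only [map_mul, Complex.conj_ofReal]

theorem continuous_poissonKer_norm_sub_arg {z : ℂ} (hz : z ∈ ball (0 : ℂ) 1) :
    Continuous fun t => poissonKer ‖z‖ (t - Complex.arg z) :=
  (continuous_poissonKer (by simpa using hz)).comp (continuous_id.sub continuous_const)

theorem intervalIntegrable_poissonKer_mul {F : ℝ → ℂ} (hF : Continuous F) {z : ℂ}
    (hz : z ∈ ball (0 : ℂ) 1) :
    IntervalIntegrable (fun t => (poissonKer ‖z‖ (t - Complex.arg z) : ℂ) * F t) volume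
      0 (2 * π) :=
  ((Complex.continuous_ofReal.comp (continuous_poissonKer_norm_sub_arg hz)).mul
    hF).intervalIntegrable _ _

theorem poissonExt_add {F G : ℝ → ℂ} (hF : Continuous F) (hG : Continuous G) {z : ℂ}
    (hz : z ∈ ball (0 : ℂ) 1) :
    poissonExt (fun t => F t + G t) z = poissonExt F z + poissonExt G z := by
  simp only [poissonExt, mul_add]
  exact intervalIntegral.integral_add (intervalIntegrable_poissonKer_mul hF hz)
    (intervalIntegrable_poissonKer_mul hG hz)

theorem poissonExt_sub {F G : ℝ → ℂ} (hF : Continuous F) (hG : Continuous G) {z : ℂ}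
    (hz : z ∈ ball (0 : ℂ) 1) :
    poissonExt (fun t => F t - G t) z = poissonExt F z - poissonExt G z := by
  simp only [poissonExt, mul_sub]
  exact intervalIntegral.integral_sub (intervalIntegrable_poissonKer_mul hF hz)
    (intervalIntegrable_poissonKer_mul hG hz)

theorem integral_poissonKer {z : ℂ} (hz : z ∈ ball (0 : ℂ) 1) :
    ∫ t in (0 : ℝ)..2 * π, poissonKer ‖z‖ (t - Complex.arg z) = 1 := by
  have h := poissonExt_comp_circleMap_of_diffContOnCl
    (diffContOnCl_const (c := (1 : ℂ))) hz
  simp only [poissonExt, Function.comp_apply, mul_one] at h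
  rw [intervalIntegral.integral_ofReal] at h
  exact_mod_cast h

theorem norm_poissonExt_le {F : ℝ → ℂ} {ε : ℝ} (h : ∀ t, ‖F t‖ ≤ ε) {z : ℂ}
    (hz : z ∈ ball (0 : ℂ) 1) : ‖poissonExt F z‖ ≤ ε := by
  have hker : ∀ t, 0 ≤ poissonKer ‖z‖ (t - Complex.arg z) :=
    fun t => poissonKer_nonneg (by simpa using hz) _
  calc ‖poissonExt F z‖ ≤ ∫ t in (0 : ℝ)..2 * π, poissonKer ‖z‖ (t - Complex.arg z) * ε := by
        refine intervalIntegral.norm_integral_le_of_norm_le two_pi_pos.le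
          (Eventually.of_forall fun t _ => ?_)
          (((continuous_poissonKer_norm_sub_arg hz).mul continuous_const).intervalIntegrable _ _)
        rw [norm_mul, Complex.norm_real, Real.norm_of_nonneg (hker t)]
        exact mul_le_mul_of_nonneg_left (h t) (hker t)
    _ = ε := by rw [intervalIntegral.integral_mul_const, integral_poissonKer hz, one_mul]

theorem exists_eq_add_conj_of_mem_span_fourier {f : C(AddCircle (2 * π), ℂ)}
    (hf : f ∈ Submodule.span ℂ (range (@fourier (2 * π)))) :
    ∃ P Q : ℂ → ℂ, Differentiable ℂ P ∧ Differentiable ℂ Q ∧ ∀ t : ℝ,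
      f t = P (circleMap 0 1 t) + conj (Q (circleMap 0 1 t)) := by
  have hpow : ∀ (n : ℕ) (t : ℝ),
      fourier (n : ℤ) (t : AddCircle (2 * π)) = circleMap 0 1 t ^ n := fun n t => by
    rw [fourier_coe_apply, circleMap, Complex.ofReal_one, one_mul, zero_add,
      ← Complex.exp_nat_mul]
    congr 1
    push_cast
    field_simp
  induction hf using Submodule.span_induction with
  | mem f hf =>
    obtain ⟨n, rfl⟩ := hf
    obtain ⟨m, rfl | rfl⟩ := Int.eq_nat_or_neg n
    · exact ⟨fun z => z ^ m, 0, by fun_prop, differentiable_const 0, fun t => by simp [hpow]⟩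
    · exact ⟨0, fun z => z ^ m, differentiable_const 0, by fun_prop,
        fun t => by rw [fourier_neg, hpow]; simp⟩
  | zero => exact ⟨0, 0, differentiable_const 0, differentiable_const 0, by simp⟩
  | add f g _ _ hf hg =>
    obtain ⟨P, Q, hP, hQ, h⟩ := hf
    obtain ⟨P', Q', hP', hQ', h'⟩ := hg
    refine ⟨P + P', Q + Q', hP.add hP', hQ.add hQ', fun t => ?_⟩
    simp only [ContinuousMap.add_apply, h, h', Pi.add_apply, map_add]
    ring
  | smul c f _ hf =>
    obtain ⟨P, Q, hP, hQ, h⟩ := hf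
    refine ⟨fun z => c * P z, fun z => conj c * Q z, hP.const_mul c, hQ.const_mul _, fun t => ?_⟩
    simp only [ContinuousMap.smul_apply, h, smul_eq_mul, map_mul, Complex.conj_conj, mul_add]

variable {F : ℝ → ℂ}

theorem exists_differentiable_add_conj_approx (hF : Continuous F)
    (hFp : Function.Periodic F (2 * π)) {ε : ℝ} (hε : 0 < ε) :
    ∃ P Q : ℂ → ℂ, Differentiable ℂ P ∧ Differentiable ℂ Q ∧ ∀ t : ℝ,
      ‖F t - (P (circleMap 0 1 t) + conj (Q (circleMap 0 1 t)))‖ < ε := by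
  have : Fact (0 < 2 * π) := ⟨two_pi_pos⟩
  let G : C(AddCircle (2 * π), ℂ) := ⟨hFp.lift, continuous_coinduced_dom.mpr hF⟩
  have hG : G ∈ (Submodule.span ℂ (range (@fourier (2 * π)))).topologicalClosure :=
    span_fourier_closure_eq_top (T := 2 * π) ▸ Submodule.mem_top
  obtain ⟨f, hf, hfG⟩ := Metric.mem_closure_iff.1 hG ε hε
  obtain ⟨P, Q, hP, hQ, h⟩ := exists_eq_add_conj_of_mem_span_fourier hf
  refine ⟨P, Q, hP, hQ, fun t => ?_⟩
  rw [← h, ← dist_eq_norm]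
  exact (ContinuousMap.dist_apply_le_dist (f := G) (g := f) t).trans_lt hfG

theorem eq_boundary_of_eqOn_poissonExt (hF : Continuous F) (hFp : Function.Periodic F (2 * π))
    {W : ℂ → ℂ} (hW : Continuous W) (hWF : EqOn W (poissonExt F) (ball 0 1)) (t : ℝ) :
    W (circleMap 0 1 t) = F t := by
  refine eq_of_forall_dist_le fun ε hε => ?_
  obtain ⟨P, Q, hP, hQ, h⟩ := exists_differentiable_add_conj_approx hF hFp (half_pos hε)
  have hPc := hP.continuous
  have hQc := hQ.continuous
  have hball : ∀ z ∈ ball (0 : ℂ) 1, ‖W z - (P z + conj (Q z))‖ ≤ ε / 2 := fun z hz => by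
    have hle := norm_poissonExt_le (fun t => (h t).le) hz
    rw [poissonExt_sub hF (by fun_prop) hz, poissonExt_add (by fun_prop) (by fun_prop) hz,
      poissonExt_conj] at hle
    have hPz := poissonExt_comp_circleMap_of_diffContOnCl hP.diffContOnCl hz
    have hQz := poissonExt_comp_circleMap_of_diffContOnCl hQ.diffContOnCl hz
    simp only [Function.comp_def] at hPz hQz
    rwa [hPz, hQz, ← hWF hz] at hle
  have hcl : ‖W (circleMap 0 1 t) - (P (circleMap 0 1 t) + conj (Q (circleMap 0 1 t)))‖
      ≤ ε / 2 := by
    have hclosed : IsClosed {z : ℂ | ‖W z - (P z + conj (Q z))‖ ≤ ε / 2} :=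
      isClosed_le (by fun_prop) continuous_const
    refine closure_minimal hball hclosed ?_
    rw [closure_ball _ one_ne_zero]
    simp
  refine (dist_triangle_right _ _ (P (circleMap 0 1 t) + conj (Q (circleMap 0 1 t)))).trans ?_
  rw [dist_eq_norm, dist_eq_norm]
  linarith [h t]

theorem exists_comp_circleMap_eq (hFp : Function.Periodic F (2 * π)) :
    ∃ g : ℂ → ℂ, g ∘ circleMap 0 1 = F := by
  refine ⟨F ∘ Complex.arg, funext fun t => ?_⟩
  have harg : Complex.arg (circleMap 0 1 t) = toIocMod two_pi_pos (-π) t := by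
    simp [circleMap, Complex.arg_exp_mul_I]
  rw [Function.comp_apply, Function.comp_apply, harg]
  exact hFp.sub_zsmul_eq _

theorem circleAverage_conj (g : ℂ → ℂ) (c : ℂ) (R : ℝ) :
    circleAverage (fun ζ => conj (g ζ)) c R = conj (circleAverage g c R) := by
  simp only [circleAverage, Complex.real_smul, intervalIntegral.intervalIntegral_conj, map_mul,
    Complex.conj_ofReal]

/-- The two summands are the Herglotz integrals of `F` and `conj F`, because the Poisson kernel is
the real part of the Herglotz kernel. -/
theorem exists_poissonExt_eq_add_conj (hF : Continuous F) (hFp : Function.Periodic F (2 * π)) :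
    ∃ A B : ℂ → ℂ, DifferentiableOn ℂ A (ball 0 1) ∧ DifferentiableOn ℂ B (ball 0 1) ∧
      ∀ z ∈ ball (0 : ℂ) 1, poissonExt F z = A z + conj (B z) := by
  obtain ⟨g, rfl⟩ := exists_comp_circleMap_eq hFp
  have hint : CircleIntegrable g 0 1 := hF.intervalIntegrable _ _
  have hint' : CircleIntegrable (fun ζ => conj (g ζ)) 0 1 :=
    (Complex.continuous_conj.comp hF).intervalIntegrable _ _
  refine ⟨fun z => circleAverage (fun ζ => herglotzRieszKernel 0 z ζ • g ζ) 0 1 / 2,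
    fun z => circleAverage (fun ζ => herglotzRieszKernel 0 z ζ • conj (g ζ)) 0 1 / 2,
    (differentiableOn_circleAverage_herglotzRieszKernel_smul hint).div_const 2,
    (differentiableOn_circleAverage_herglotzRieszKernel_smul hint').div_const 2, fun z hz => ?_⟩
  have hh : Continuous (herglotzRieszKernel 0 z ∘ circleMap 0 1) :=
    (continuousOn_herglotzRieszKernel_sphere hz).comp_continuous (continuous_circleMap 0 1)
      (by simp)
  have h₁ : CircleIntegrable (fun ζ => herglotzRieszKernel 0 z ζ • g ζ) 0 1 :=
    (hh.smul hF).intervalIntegrable _ _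
  have h₂ : CircleIntegrable (fun ζ => conj (herglotzRieszKernel 0 z ζ) • g ζ) 0 1 :=
    ((Complex.continuous_conj.comp hh).smul hF).intervalIntegrable _ _
  have hconj : (fun ζ => herglotzRieszKernel 0 z ζ • conj (g ζ)) =
      fun ζ => conj (conj (herglotzRieszKernel 0 z ζ) • g ζ) := by
    simp only [smul_eq_mul, map_mul, Complex.conj_conj]
  simp only [hconj, circleAverage_conj, map_div₀, Complex.conj_conj, map_ofNat]
  rw [poissonExt_comp_circleMap, ← add_div, ← circleAverage_fun_add h₁ h₂, eq_div_iff two_ne_zero,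
    mul_comm, ← smul_eq_mul, ← circleAverage_fun_smul]
  congr 1
  ext ζ
  simp only [poissonKernel_eq_re_herglotzRieszKernel, Pi.smul_apply', Function.comp_apply,
    Complex.real_smul, Complex.re_eq_add_conj, smul_eq_mul]
  ring

end Poisson

section Umlaufsatz

theorem exists_continuous_exp_eq {X : Type*} [TopologicalSpace X] [SimplyConnectedSpace X]
    [LocallyPathConnectedSpace X] {f : X → ℂ} (hf : Continuous f) (hf₀ : ∀ x, f x ≠ 0) :
    ∃ L : X → ℂ, Continuous L ∧ ∀ x, Complex.exp (L x) = f x := by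
  obtain ⟨x₀⟩ : Nonempty X := inferInstance
  obtain ⟨L, ⟨-, hL⟩, -⟩ := Complex.isCoveringMapOn_exp.existsUnique_continuousMap_lifts
    ⟨f, hf⟩ (Complex.exp_log (hf₀ x₀)) hf₀
  exact ⟨L, L.continuous, fun x => congr_fun hL x⟩

theorem eq_of_isPreconnected_of_exp_eq {X : Type*} [TopologicalSpace X] {s : Set X}
    (hs : IsPreconnected s) {g : X → ℂ} (hg : ContinuousOn g s) {c : ℂ}
    (h : ∀ x ∈ s, Complex.exp (g x) = c) {x y : X} (hx : x ∈ s) (hy : y ∈ s) : g x = g y :=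
  Complex.isCoveringMap_exp.constOn_of_comp hs hg
    (fun a ha b hb => Subtype.ext ((h a ha).trans (h b hb).symm)) hx hy

theorem sub_eq_log_sub_log_of_mul_exp_mem_slitPlane {X : Type*} [TopologicalSpace X] {s : Set X}
    (hs : IsPreconnected s) {g : X → ℂ} (hg : ContinuousOn g s) {w : ℂ}
    (h : ∀ x ∈ s, w * Complex.exp (g x) ∈ Complex.slitPlane) {x y : X} (hx : x ∈ s)
    (hy : y ∈ s) :
    g y - g x = Complex.log (w * Complex.exp (g y)) - Complex.log (w * Complex.exp (g x)) := by
  have hconst : g y - Complex.log (w * Complex.exp (g y)) =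
      g x - Complex.log (w * Complex.exp (g x)) := by
    refine eq_of_isPreconnected_of_exp_eq hs (c := w⁻¹)
      (hg.sub ((continuousOn_const.mul hg.cexp).clog h)) (fun z hz => ?_) hy hx
    simp only [Pi.sub_apply, Pi.mul_apply]
    rw [Complex.exp_sub, Complex.exp_log (Complex.slitPlane_ne_zero (h z hz)), ← div_div,
      div_right_comm, div_self (Complex.exp_ne_zero _), one_div]
  linear_combination hconst

theorem exists_forall_le_of_periodic {f : ℝ → ℝ} {T : ℝ} (hf : Continuous f)
    (hp : Function.Periodic f T) (hT : T ≠ 0) : ∃ t₀, ∀ t, f t₀ ≤ f t := by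
  obtain ⟨_, ⟨t₀, rfl⟩, hmin⟩ := (hp.compact_of_continuous hT hf).exists_isLeast (range_nonempty f)
  exact ⟨t₀, fun t => hmin ⟨t, rfl⟩⟩

theorem apply_add_ne_of_periodic_of_injOn {α : Type*} {F : ℝ → α} {T : ℝ} (hT : 0 < T)
    (hp : Function.Periodic F T) (hinj : InjOn F (Ico 0 T)) (s : ℝ) {h : ℝ} (hh : h ∈ Ioo 0 T) :
    F (s + h) ≠ F s := by
  intro heq
  have hmod : toIcoMod hT 0 (s + h) = toIcoMod hT 0 s := by
    refine hinj (by simpa using toIcoMod_mem_Ico hT 0 (s + h))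
      (by simpa using toIcoMod_mem_Ico hT 0 s) ?_
    rwa [toIcoMod, toIcoMod, hp.sub_zsmul_eq, hp.sub_zsmul_eq]
  have hmod' := (toIcoMod_inj hT (c := s)).2 ((toIcoMod_inj hT).1 hmod)
  rw [(toIcoMod_eq_self hT).2 ⟨by linarith [hh.1], by linarith [hh.2]⟩,
    toIcoMod_apply_left] at hmod'
  linarith [hh.1]

theorem periodic_deriv {E : Type*} [NormedAddCommGroup E] [NormedSpace ℝ E] {F : ℝ → E} {T : ℝ}
    (hp : Function.Periodic F T) : Function.Periodic (deriv F) T := fun t => by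
  rw [← deriv_comp_add_const, funext hp]

/-- The mean of `F'` over the segment from `s` to `s + h`: the difference quotient of `F`,
extended by `F' s` to `h = 0`. -/
noncomputable def meanDeriv {E : Type*} [NormedAddCommGroup E] [NormedSpace ℝ E]
    (F : ℝ → E) (s h : ℝ) : E :=
  ∫ x in (0 : ℝ)..1, deriv F (s + x * h)

/-- The chord of a `T`-periodic curve from `F s` to `F (s + h)`, scaled by `T / (h * (T - h))`.
It is written as a difference of two mean derivatives so as to extend to `h = 0` and `h = T`,
where its values are `F' s` and `-F' s`. -/
noncomputable def chord {E : Type*} [NormedAddCommGroup E] [NormedSpace ℝ E]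
    (F : ℝ → E) (T s h : ℝ) : E :=
  meanDeriv F s h - meanDeriv F s (h - T)

section Chord

variable {E : Type*} [NormedAddCommGroup E] [NormedSpace ℝ E] {F : ℝ → E} {T : ℝ}

theorem continuous_meanDeriv (hF : ContDiff ℝ 1 F) :
    Continuous fun p : ℝ × ℝ => meanDeriv F p.1 p.2 := by
  refine intervalIntegral.continuous_parametric_intervalIntegral_of_continuous' ?_ 0 1
  simp only [Function.uncurry_def]
  exact (hF.continuous_deriv le_rfl).comp (by fun_prop)

theorem continuous_chord (hF : ContDiff ℝ 1 F) :
    Continuous fun p : ℝ × ℝ => chord F T p.1 p.2 :=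
  (continuous_meanDeriv hF).sub ((continuous_meanDeriv hF).comp
    (by fun_prop : Continuous fun p : ℝ × ℝ => (p.1, p.2 - T)))

theorem meanDeriv_zero [CompleteSpace E] (s : ℝ) : meanDeriv F s 0 = deriv F s := by
  simp [meanDeriv]

theorem smul_meanDeriv [CompleteSpace E] (hF : ContDiff ℝ 1 F) (s h : ℝ) :
    h • meanDeriv F s h = F (s + h) - F s := by
  simpa only [meanDeriv, smul_eq_mul] using intervalIntegral.integral_unitInterval_deriv_eq_sub
    (f := F) (f' := deriv F) (z₀ := s) (z₁ := h)
    ((hF.continuous_deriv le_rfl).comp (by fun_prop)).continuousOn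
    fun t _ => (hF.differentiable one_ne_zero _).hasDerivAt

theorem meanDeriv_add_neg (s h : ℝ) : meanDeriv F (s + h) (-h) = meanDeriv F s h := by
  have hrev := intervalIntegral.integral_comp_sub_left (a := 0) (b := 1)
    (fun x => deriv F (s + x * h)) (1 : ℝ)
  rw [sub_zero, sub_self] at hrev
  rw [meanDeriv, meanDeriv, ← hrev]
  congr 1 with x
  ring_nf

theorem meanDeriv_add_period (hp : Function.Periodic F T) (s h : ℝ) :
    meanDeriv F (s + T) h = meanDeriv F s h := by
  simp only [meanDeriv, add_right_comm s T, periodic_deriv hp _]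

theorem smul_chord [CompleteSpace E] (hF : ContDiff ℝ 1 F) (hp : Function.Periodic F T)
    (s h : ℝ) : (h * (T - h)) • chord F T s h = T • (F (s + h) - F s) := by
  have hfwd := smul_meanDeriv hF s h
  have hbwd := smul_meanDeriv hF s (h - T)
  rw [← add_sub_assoc, hp.sub_eq] at hbwd
  calc (h * (T - h)) • chord F T s h
      = (T - h) • h • meanDeriv F s h + h • (h - T) • meanDeriv F s (h - T) := by
        rw [chord]
        module
    _ = T • (F (s + h) - F s) := by
        rw [hfwd, hbwd]
        module

theorem chord_zero [CompleteSpace E] (hF : ContDiff ℝ 1 F) (hp : Function.Periodic F T)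
    (hT : T ≠ 0) (s : ℝ) : chord F T s 0 = deriv F s := by
  have hbwd := smul_meanDeriv hF s (0 - T)
  rw [← add_sub_assoc, hp.sub_eq, add_zero, sub_self, smul_eq_zero_iff_right (by simpa)] at hbwd
  rw [chord, meanDeriv_zero, hbwd, sub_zero]

theorem chord_reverse (hp : Function.Periodic F T) (s h : ℝ) :
    chord F T (s + h) (T - h) = -chord F T s h := by
  have hshift : s + h = s + (h - T) + T := by ring
  have hfwd : meanDeriv F (s + h) (T - h) = meanDeriv F s (h - T) := by
    rw [hshift, meanDeriv_add_period hp, ← meanDeriv_add_neg s (h - T), neg_sub]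
  rw [chord, chord, hfwd, sub_sub_cancel_left, meanDeriv_add_neg, neg_sub]

theorem chord_period [CompleteSpace E] (hF : ContDiff ℝ 1 F) (hp : Function.Periodic F T)
    (hT : T ≠ 0) (s : ℝ) : chord F T s T = -deriv F s := by
  simpa [chord_zero hF hp hT] using chord_reverse hp s 0

theorem chord_ne_zero [CompleteSpace E] (hF : ContDiff ℝ 1 F) (hp : Function.Periodic F T)
    (hT : 0 < T) (hF' : ∀ t, deriv F t ≠ 0) (hinj : InjOn F (Ico 0 T)) (s : ℝ) {h : ℝ}
    (hh : h ∈ Icc 0 T) : chord F T s h ≠ 0 := by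
  rcases eq_endpoints_or_mem_Ioo_of_mem_Icc hh with rfl | rfl | hh
  · simpa only [chord_zero hF hp hT.ne'] using hF' s
  · simpa only [chord_period hF hp hT.ne', neg_ne_zero] using hF' s
  · intro hzero
    have hchord := smul_chord hF hp s h
    rw [hzero, smul_zero, eq_comm, smul_eq_zero_iff_right hT.ne', sub_eq_zero] at hchord
    exact apply_add_ne_of_periodic_of_injOn hT hp hinj s hh hchord

end Chord

variable {F : ℝ → ℂ} {T : ℝ}

theorem chord_im_nonneg (hF : ContDiff ℝ 1 F) (hp : Function.Periodic F T) (hT : 0 < T) {s c : ℝ}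
    (hd : deriv F s = c) (hmin : ∀ t, (F s).im ≤ (F t).im) {h : ℝ} (hh : h ∈ Icc 0 T) :
    0 ≤ (chord F T s h).im := by
  rcases eq_endpoints_or_mem_Ioo_of_mem_Icc hh with rfl | rfl | hh
  · simp [chord_zero hF hp hT.ne', hd]
  · simp [chord_period hF hp hT.ne', hd]
  · have him := congr_arg Complex.im (smul_chord hF hp s h)
    rw [Complex.smul_im, Complex.smul_im, smul_eq_mul, smul_eq_mul, Complex.sub_im] at him
    have hscale : 0 < h * (T - h) := mul_pos hh.1 (sub_pos.2 hh.2)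
    refine nonneg_of_mul_nonneg_right (him ▸ ?_) hscale
    exact mul_nonneg hT.le (sub_nonneg.2 (hmin _))

theorem exists_lowest_point_deriv_eq_ofReal (hF : ContDiff ℝ 1 F) (hp : Function.Periodic F T)
    (hT : T ≠ 0) : ∃ s c : ℝ, deriv F s = c ∧ ∀ t, (F s).im ≤ (F t).im := by
  obtain ⟨s, hs⟩ := exists_forall_le_of_periodic (Complex.continuous_im.comp hF.continuous)
    (hp.comp Complex.im) hT
  have hder : HasDerivAt (fun t => (F t).im) (deriv F s).im s :=
    Complex.imCLM.hasFDerivAt.comp_hasDerivAt s (hF.differentiable one_ne_zero s).hasDerivAt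
  have him : (deriv F s).im = 0 := IsLocalMin.hasDerivAt_eq_zero (Eventually.of_forall hs) hder
  exact ⟨s, (deriv F s).re, Complex.ext rfl (by simpa using him), hs⟩

theorem exists_continuous_exp_eq_chord (hF : ContDiff ℝ 1 F) (hp : Function.Periodic F T)
    (hT : 0 < T) (hF' : ∀ t, deriv F t ≠ 0) (hinj : InjOn F (Ico 0 T)) :
    ∃ L : ℝ × ℝ → ℂ, Continuous L ∧
      ∀ s, ∀ h ∈ Icc 0 T, Complex.exp (L (s, h)) = chord F T s h := by
  obtain ⟨L, hL, hexp⟩ := exists_continuous_exp_eq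
    (f := fun p : ℝ × ℝ => chord F T p.1 (projIcc 0 T hT.le p.2))
    ((continuous_chord hF).comp (f := fun p : ℝ × ℝ => (p.1, (projIcc 0 T hT.le p.2 : ℝ)))
      (by fun_prop))
    fun p => chord_ne_zero hF hp hT hF' hinj p.1 (projIcc 0 T hT.le p.2).2
  refine ⟨L, hL, fun s h hh => ?_⟩
  rw [hexp, projIcc_of_mem hT.le hh]

theorem sub_eq_pi_mul_I_or_of_exp_eq_chord (hF : ContDiff ℝ 1 F) (hp : Function.Periodic F T)
    (hT : 0 < T) (hF' : ∀ t, deriv F t ≠ 0) {s c : ℝ} (hd : deriv F s = c)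
    (hmin : ∀ t, (F s).im ≤ (F t).im) {g : ℝ → ℂ} (hg : Continuous g)
    (hexp : ∀ h ∈ Icc 0 T, Complex.exp (g h) = chord F T s h) :
    g T - g 0 = π * Complex.I ∨ g T - g 0 = -(π * Complex.I) := by
  have hslit : ∀ h ∈ Icc 0 T, -Complex.I * Complex.exp (g h) ∈ Complex.slitPlane := by
    intro h hh
    have him := chord_im_nonneg hF hp hT hd hmin hh
    have hne := Complex.exp_ne_zero (g h)
    rw [← hexp h hh] at him
    rw [Complex.mem_slitPlane_iff]
    simp only [neg_mul, Complex.neg_re, Complex.I_mul_re, neg_neg, Complex.neg_im,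
      Complex.I_mul_im, ne_eq, neg_eq_zero]
    by_contra! hcon
    exact hne (Complex.ext hcon.2 (le_antisymm hcon.1 him))
  have h0 : (0 : ℝ) ∈ Icc 0 T := left_mem_Icc.2 hT.le
  have h1 : T ∈ Icc 0 T := right_mem_Icc.2 hT.le
  rw [sub_eq_log_sub_log_of_mul_exp_mem_slitPlane isPreconnected_Icc hg.continuousOn hslit h0 h1,
    hexp _ h0, hexp _ h1, chord_period hF hp hT.ne', chord_zero hF hp hT.ne', hd]
  have hc : c ≠ 0 := fun hc => hF' s (by rw [hd, hc, Complex.ofReal_zero])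
  rcases hc.lt_or_gt with hc | hc
  · right
    rw [neg_mul_comm Complex.I (c : ℂ), ← Complex.ofReal_neg,
      Complex.log_mul_ofReal _ (neg_pos.2 hc) _ Complex.I_ne_zero,
      Complex.log_mul_ofReal _ (neg_pos.2 hc) _ (neg_ne_zero.2 Complex.I_ne_zero), Complex.log_I,
      Complex.log_neg_I]
    ring
  · left
    rw [neg_mul_neg, Complex.log_mul_ofReal c hc _ Complex.I_ne_zero,
      Complex.log_mul_ofReal c hc _ (neg_ne_zero.2 Complex.I_ne_zero), Complex.log_I,
      Complex.log_neg_I]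
    ring

theorem exists_log_deriv_of_simple_closed (hF : ContDiff ℝ 1 F) (hp : Function.Periodic F T)
    (hT : 0 < T) (hF' : ∀ t, deriv F t ≠ 0) (hinj : InjOn F (Ico 0 T)) :
    ∃ Λ : ℝ → ℂ, Continuous Λ ∧ (∀ t, Complex.exp (Λ t) = deriv F t) ∧
      ((∀ t, Λ (t + T) = Λ t + 2 * π * Complex.I) ∨
        ∀ t, Λ (t + T) = Λ t - 2 * π * Complex.I) := by
  obtain ⟨L, hL, hexp⟩ := exists_continuous_exp_eq_chord hF hp hT hF' hinj
  obtain ⟨s₀, c, hd, hmin⟩ := exists_lowest_point_deriv_eq_ofReal hF hp hT.ne'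
  have h0 : (0 : ℝ) ∈ Icc 0 T := left_mem_Icc.2 hT.le
  have hT' : T ∈ Icc 0 T := right_mem_Icc.2 hT.le
  have hrev : ∀ t, ∀ h ∈ Icc 0 T, L (t + h, T - h) - L (t, h) = L (s₀, T) - L (s₀, 0) := by
    intro t h hh
    have hconst := eq_of_isPreconnected_of_exp_eq (s := univ ×ˢ Icc 0 T) (c := -1)
      (g := fun p => L (p.1 + p.2, T - p.2) - L p) (x := (t, h)) (y := (s₀, 0))
      (isPreconnected_univ.prod isPreconnected_Icc) (by fun_prop) ?_ ⟨trivial, hh⟩ ⟨trivial, h0⟩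
    · simpa only [add_zero, sub_zero] using hconst
    · rintro ⟨s, h⟩ ⟨-, hh⟩
      rw [Complex.exp_sub, hexp _ _ hh, hexp _ _ ⟨sub_nonneg.2 hh.2, sub_le_self T hh.1⟩,
        chord_reverse hp, neg_div, div_self (chord_ne_zero hF hp hT hF' hinj s hh)]
  have hturn : ∀ t, L (t + T, 0) = L (t, 0) + 2 * (L (s₀, T) - L (s₀, 0)) := fun t => by
    have hstart := hrev t 0 h0
    have hend := hrev t T hT'
    rw [add_zero, sub_zero] at hstart
    rw [sub_self] at hend
    linear_combination hstart + hend
  refine ⟨fun t => L (t, 0), by fun_prop, fun t => by rw [hexp t 0 h0, chord_zero hF hp hT.ne'], ?_⟩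
  refine (sub_eq_pi_mul_I_or_of_exp_eq_chord hF hp hT hF' hd hmin (g := fun h => L (s₀, h))
    (by fun_prop) (hexp s₀)).imp (fun hκ t => ?_) (fun hκ t => ?_)
  all_goals
    dsimp only
    rw [hturn, hκ]
    ring

end Umlaufsatz

section Wirtinger

/-- The Wirtinger derivative `∂W/∂z`, defined for real differentiable `W`. -/
noncomputable def wirtinger (W : ℂ → ℂ) (z : ℂ) : ℂ :=
  (fderiv ℝ W z 1 - Complex.I * fderiv ℝ W z Complex.I) / 2

/-- The Wirtinger derivative `∂W/∂z̄`, defined for real differentiable `W`; it vanishes where `W` is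
complex differentiable. -/
noncomputable def wirtingerConj (W : ℂ → ℂ) (z : ℂ) : ℂ :=
  (fderiv ℝ W z 1 + Complex.I * fderiv ℝ W z Complex.I) / 2

variable {W : ℂ → ℂ}

theorem fderiv_eq_wirtinger_mul_add (W : ℂ → ℂ) (z h : ℂ) :
    fderiv ℝ W z h = wirtinger W z * h + wirtingerConj W z * conj h := by
  have hcoord : fderiv ℝ W z h = h.re * fderiv ℝ W z 1 + h.im * fderiv ℝ W z Complex.I := by
    conv_lhs => rw [← Complex.re_add_im h, ← mul_one (h.re : ℂ)]
    rw [← Complex.real_smul, ← Complex.real_smul, map_add, map_smul, map_smul, Complex.real_smul,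
      Complex.real_smul]
  rw [hcoord, wirtinger, wirtingerConj]
  conv_rhs => rw [← Complex.re_add_im h]
  simp only [map_add, map_mul, Complex.conj_ofReal, Complex.conj_I]
  linear_combination (h.im * fderiv ℝ W z Complex.I) * Complex.I_mul_I

theorem jac_eq_sq_norm_sub_sq_norm (W : ℂ → ℂ) (z : ℂ) :
    Jac W z = ‖wirtinger W z‖ ^ 2 - ‖wirtingerConj W z‖ ^ 2 := by
  have hdet : Jac W z = (fderiv ℝ W z 1).re * (fderiv ℝ W z Complex.I).im -
      (fderiv ℝ W z Complex.I).re * (fderiv ℝ W z 1).im := by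
    rw [Jac, ← LinearMap.det_toMatrix Complex.basisOneI, Matrix.det_fin_two]
    simp [LinearMap.toMatrix_apply]
  rw [hdet, wirtinger, wirtingerConj, Complex.sq_norm, Complex.sq_norm, Complex.normSq_apply,
    Complex.normSq_apply]
  simp only [Complex.div_ofNat_re, Complex.div_ofNat_im, Complex.sub_re, Complex.sub_im,
    Complex.add_re, Complex.add_im, Complex.I_mul_re, Complex.I_mul_im]
  ring

theorem jac_pos_iff (W : ℂ → ℂ) (z : ℂ) :
    0 < Jac W z ↔ ‖wirtingerConj W z‖ < ‖wirtinger W z‖ := by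
  rw [jac_eq_sq_norm_sub_sq_norm, sub_pos, pow_lt_pow_iff_left₀ (norm_nonneg _) (norm_nonneg _)
    two_ne_zero]

theorem continuous_wirtinger (hW : ContDiff ℝ 1 W) : Continuous (wirtinger W) := by
  have hfderiv := hW.continuous_fderiv one_ne_zero
  exact ((hfderiv.clm_apply continuous_const).sub
    (continuous_const.mul (hfderiv.clm_apply continuous_const))).div_const 2

theorem continuous_wirtingerConj (hW : ContDiff ℝ 1 W) : Continuous (wirtingerConj W) := by
  have hfderiv := hW.continuous_fderiv one_ne_zero
  exact ((hfderiv.clm_apply continuous_const).add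
    (continuous_const.mul (hfderiv.clm_apply continuous_const))).div_const 2

theorem hasDerivAt_comp_circleMap {c : ℂ} {R t : ℝ}
    (hW : DifferentiableAt ℝ W (circleMap c R t)) :
    HasDerivAt (W ∘ circleMap c R)
      (wirtinger W (circleMap c R t) * (circleMap 0 R t * Complex.I) +
        wirtingerConj W (circleMap c R t) * conj (circleMap 0 R t * Complex.I)) t := by
  rw [← fderiv_eq_wirtinger_mul_add]
  exact hW.hasFDerivAt.comp_hasDerivAt t (hasDerivAt_circleMap c R t)

section AddConj

variable {A B : ℂ → ℂ} {U : Set ℂ}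

theorem fderiv_of_eqOn_add_conj (hU : IsOpen U) (hA : DifferentiableOn ℂ A U)
    (hB : DifferentiableOn ℂ B U) (hW : ∀ z ∈ U, W z = A z + conj (B z)) {z : ℂ} (hz : z ∈ U)
    (h : ℂ) : fderiv ℝ W z h = h * deriv A z + conj (h * deriv B z) := by
  have hA' := (hA.differentiableAt (hU.mem_nhds hz)).hasDerivAt.hasFDerivAt.restrictScalars ℝ
  have hB' := (hB.differentiableAt (hU.mem_nhds hz)).hasDerivAt.hasFDerivAt.restrictScalars ℝ
  have hconj := (Complex.conjCLE.toContinuousLinearMap.hasFDerivAt (x := B z)).comp z hB'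
  have hd := (hA'.add hconj).congr_of_eventuallyEq (f₁ := W)
    (eventually_of_mem (hU.mem_nhds hz) fun w hw => by simp [hW w hw])
  rw [hd.fderiv]
  simp

theorem wirtinger_of_eqOn_add_conj (hU : IsOpen U) (hA : DifferentiableOn ℂ A U)
    (hB : DifferentiableOn ℂ B U) (hW : ∀ z ∈ U, W z = A z + conj (B z)) {z : ℂ} (hz : z ∈ U) :
    wirtinger W z = deriv A z := by
  simp only [wirtinger, fderiv_of_eqOn_add_conj hU hA hB hW hz, map_mul, Complex.conj_I, map_one]
  linear_combination ((conj (deriv B z) - deriv A z) / 2) * Complex.I_mul_I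

theorem wirtingerConj_of_eqOn_add_conj (hU : IsOpen U) (hA : DifferentiableOn ℂ A U)
    (hB : DifferentiableOn ℂ B U) (hW : ∀ z ∈ U, W z = A z + conj (B z)) {z : ℂ} (hz : z ∈ U) :
    wirtingerConj W z = conj (deriv B z) := by
  simp only [wirtingerConj, fderiv_of_eqOn_add_conj hU hA hB hW hz, map_mul, Complex.conj_I,
    map_one]
  linear_combination ((deriv A z - conj (deriv B z)) / 2) * Complex.I_mul_I

theorem diffContOnCl_wirtinger (hU : IsOpen U) (hA : DifferentiableOn ℂ A U)
    (hB : DifferentiableOn ℂ B U) (hW : ∀ z ∈ U, W z = A z + conj (B z))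
    (hW' : ContDiff ℝ 1 W) : DiffContOnCl ℂ (wirtinger W) U :=
  ⟨(hA.deriv hU).congr fun _ hz => wirtinger_of_eqOn_add_conj hU hA hB hW hz,
    (continuous_wirtinger hW').continuousOn⟩

theorem diffContOnCl_conj_wirtingerConj (hU : IsOpen U) (hA : DifferentiableOn ℂ A U)
    (hB : DifferentiableOn ℂ B U) (hW : ∀ z ∈ U, W z = A z + conj (B z))
    (hW' : ContDiff ℝ 1 W) : DiffContOnCl ℂ (fun z => conj (wirtingerConj W z)) U :=
  ⟨(hB.deriv hU).congr fun z hz => by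
      rw [wirtingerConj_of_eqOn_add_conj hU hA hB hW hz, Complex.conj_conj],
    (Complex.continuous_conj.comp (continuous_wirtingerConj hW')).continuousOn⟩

end AddConj

end Wirtinger

section MaximumModulus

variable {E : Type*} [NormedAddCommGroup E] [NormedSpace ℂ E] [FiniteDimensional ℂ E]
  [Nontrivial E] {U : Set E}

theorem norm_lt_of_forall_mem_frontier_norm_lt {G : Type*} [NormedAddCommGroup G]
    [NormedSpace ℂ G] {f : E → G} {C : ℝ} (hU : Bornology.IsBounded U) (hf : DiffContOnCl ℂ f U)
    (hC : ∀ z ∈ frontier U, ‖f z‖ < C) {z : E} (hz : z ∈ closure U) : ‖f z‖ < C := by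
  obtain ⟨w, hw, hmax⟩ :=
    Complex.exists_mem_frontier_isMaxOn_norm hU (closure_nonempty_iff.1 ⟨z, hz⟩) hf
  exact (hmax hz).trans_lt (hC w hw)

theorem re_pos_of_forall_mem_frontier_re_pos {f : E → ℂ} (hU : Bornology.IsBounded U)
    (hf : DiffContOnCl ℂ f U) (hpos : ∀ z ∈ frontier U, 0 < (f z).re) {z : E}
    (hz : z ∈ closure U) : 0 < (f z).re := by
  have hexp := norm_lt_of_forall_mem_frontier_norm_lt (C := 1) hU
    (Complex.differentiable_exp.comp_diffContOnCl hf.neg)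
    (fun w hw => by simpa [Complex.norm_exp] using hpos w hw) hz
  simpa [Complex.norm_exp] using hexp

end MaximumModulus

section ArgumentPrinciple

theorem re_mul_exp_neg (a w : ℂ) :
    (a * Complex.exp (-w)).re =
      Real.exp (-w.re) * (a * Complex.exp (-(w.im * Complex.I))).re := by
  rw [← Complex.re_ofReal_mul, Complex.ofReal_exp, mul_left_comm, ← Complex.exp_add,
    Complex.ofReal_neg, ← neg_add, Complex.re_add_im]

theorem re_mul_exp_neg_mul_I_sub_le (a : ℂ) (x y : ℝ) :
    (a * Complex.exp (-(x * Complex.I))).re - (a * Complex.exp (-(y * Complex.I))).re ≤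
      ‖a‖ * |x - y| := by
  have hfactor : Complex.exp (-(x * Complex.I)) - Complex.exp (-(y * Complex.I)) =
      Complex.exp ((-x : ℝ) * Complex.I) * (1 - Complex.exp (Complex.I * (x - y : ℝ))) := by
    rw [mul_sub, ← Complex.exp_add, mul_one]
    push_cast
    congr 2 <;> ring
  rw [← Complex.sub_re, ← mul_sub]
  refine (Complex.re_le_norm _).trans ?_
  rw [norm_mul, hfactor, norm_mul, Complex.norm_exp_ofReal_mul_I, one_mul, norm_sub_rev]
  exact mul_le_mul_of_nonneg_left norm_exp_I_mul_ofReal_sub_one_le (norm_nonneg a)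

theorem exists_differentiable_im_approx {θ : ℝ → ℝ} (hθ : Continuous θ)
    (hp : Function.Periodic θ (2 * π)) {ε : ℝ} (hε : 0 < ε) :
    ∃ P : ℂ → ℂ, Differentiable ℂ P ∧ ∀ t : ℝ, |θ t - (P (circleMap 0 1 t)).im| < ε := by
  obtain ⟨P, Q, hP, hQ, h⟩ := exists_differentiable_add_conj_approx
    (Complex.continuous_ofReal.comp hθ) (hp.comp _) hε
  refine ⟨fun z => Complex.I * (P z + Q z), (hP.add hQ).const_mul _, fun t => ?_⟩
  refine (le_of_eq ?_).trans_lt ((Complex.abs_re_le_norm _).trans_lt (h t))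
  simp

theorem ne_zero_of_re_mul_exp_neg_pos {a : ℂ → ℂ} (ha : DiffContOnCl ℂ a (ball 0 1)) {θ : ℝ → ℝ}
    (hθ : Continuous θ) (hp : Function.Periodic θ (2 * π))
    (hpos : ∀ t, 0 < (a (circleMap 0 1 t) * Complex.exp (-(θ t * Complex.I))).re) {z : ℂ}
    (hz : z ∈ ball (0 : ℂ) 1) : a z ≠ 0 := by
  have hac : Continuous fun t => a (circleMap 0 1 t) :=
    ha.continuousOn_ball.comp_continuous (continuous_circleMap 0 1) (by simp)
  have ha₀ : ∀ t, 0 < ‖a (circleMap 0 1 t)‖ := fun t => norm_pos_iff.2 fun h => by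
    simpa [h] using hpos t
  obtain ⟨t₀, ht₀⟩ := exists_forall_le_of_periodic
    (f := fun t => (a (circleMap 0 1 t) * Complex.exp (-(θ t * Complex.I))).re /
      ‖a (circleMap 0 1 t)‖)
    ((Complex.continuous_re.comp (hac.mul (by fun_prop))).div hac.norm fun t => (ha₀ t).ne')
    (fun t => by simp only [hp t, periodic_circleMap 0 1 t]) two_pi_pos.ne'
  obtain ⟨P, hP, hPθ⟩ := exists_differentiable_im_approx hθ hp (div_pos (hpos t₀) (ha₀ t₀))
  have hexp : Differentiable ℂ fun z => Complex.exp (-P z) := hP.neg.cexp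
  suffices 0 < (a z * Complex.exp (-P z)).re from fun h => by simp [h] at this
  refine re_pos_of_forall_mem_frontier_re_pos isBounded_ball (ha.smul hexp.diffContOnCl)
    (fun ζ hζ => ?_) (subset_closure hz)
  rw [frontier_ball _ one_ne_zero, ← abs_one, ← range_circleMap] at hζ
  obtain ⟨t, rfl⟩ := hζ
  rw [smul_eq_mul, re_mul_exp_neg]
  refine mul_pos (Real.exp_pos _) ?_
  have hclose := (re_mul_exp_neg_mul_I_sub_le (a (circleMap 0 1 t)) (θ t) _).trans_lt
    (mul_lt_mul_of_pos_left ((hPθ t).trans_le (ht₀ t)) (ha₀ t))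
  rw [mul_div_cancel₀ _ (ha₀ t).ne'] at hclose
  linarith

/-- Since `φ` follows the argument of `a` up to a right angle, `-n` is the winding number of `a`
along the circle, that is, the number of zeros of `a` in the disk. -/
theorem eq_zero_and_ne_zero_of_re_mul_exp_neg_pos {a : ℂ → ℂ} (ha : DiffContOnCl ℂ a (ball 0 1))
    {φ : ℝ → ℝ} (hφ : Continuous φ) {n : ℕ} (hn : ∀ t, φ (t + 2 * π) = φ t - n * (2 * π))
    (hpos : ∀ t, 0 < (a (circleMap 0 1 t) * Complex.exp (-(φ t * Complex.I))).re) :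
    n = 0 ∧ ∀ z ∈ ball (0 : ℂ) 1, a z ≠ 0 := by
  have hne : ∀ z ∈ ball (0 : ℂ) 1, z ^ n * a z ≠ 0 := fun z => by
    refine ne_zero_of_re_mul_exp_neg_pos (θ := fun t => φ t + n * t)
      ((differentiable_id.pow n).diffContOnCl.smul ha) (by fun_prop) (fun t => ?_) (fun t => ?_)
    · dsimp only
      rw [hn]
      ring
    · convert hpos t using 2
      simp only [circleMap, id, Pi.pow_apply, smul_eq_mul]
      rw [Complex.ofReal_one, one_mul, zero_add, ← Complex.exp_nat_mul, mul_right_comm,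
        ← Complex.exp_add, mul_comm]
      congr 2
      push_cast
      ring
  refine ⟨?_, fun z hz => right_ne_zero_of_mul (hne z hz)⟩
  by_contra hn₀
  exact hne 0 (mem_ball_self one_pos) (by rw [zero_pow hn₀, zero_mul])

end ArgumentPrinciple

section Jacobian

theorem isLocalHomeomorphOn_of_det_fderiv_ne_zero {E : Type*} [NormedAddCommGroup E]
    [NormedSpace ℝ E] [FiniteDimensional ℝ E] {f : E → E} {s : Set E}
    (hf : ∀ x ∈ s, ContDiffAt ℝ 1 f x) (hdet : ∀ x ∈ s, (fderiv ℝ f x).det ≠ 0) :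
    IsLocalHomeomorphOn f s := by
  intro x hx
  have := FiniteDimensional.complete ℝ E
  have hd : HasStrictFDerivAt f
      (((fderiv ℝ f x).toContinuousLinearEquivOfDetNeZero (hdet x hx) : E ≃L[ℝ] E) : E →L[ℝ] E)
      x := by
    rw [ContinuousLinearMap.coe_toContinuousLinearEquivOfDetNeZero]
    exact (hf x hx).hasStrictFDerivAt one_ne_zero
  exact ⟨hd.toOpenPartialHomeomorph f, hd.mem_toOpenPartialHomeomorph_source, rfl⟩

theorem re_mul_exp_neg_im_mul_I_pos {α β L : ℂ} (hL : Complex.exp L = α + β) (h : ‖β‖ < ‖α‖) :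
    0 < (α * Complex.exp (-(L.im * Complex.I))).re := by
  have hrot : conj (α + β) = Real.exp L.re * Complex.exp (-(L.im * Complex.I)) := by
    rw [← hL, ← Complex.exp_conj, Complex.ofReal_exp, ← Complex.exp_add]
    congr 1
    apply Complex.ext <;> simp
  have hre : 0 < (α * conj (α + β)).re := by
    have hcross := neg_le_of_abs_le (Complex.abs_re_le_norm (α * conj β))
    rw [norm_mul, Complex.norm_conj] at hcross
    rw [map_add, mul_add, Complex.mul_conj, Complex.add_re, Complex.ofReal_re,
      Complex.normSq_eq_norm_sq]
    nlinarith [norm_nonneg β]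
  rw [hrot, mul_left_comm, Complex.re_ofReal_mul] at hre
  exact pos_of_mul_pos_right hre (Real.exp_pos _).le

theorem image_circleMap_Ico_two_pi (c : ℂ) (R : ℝ) :
    circleMap c R '' Ico 0 (2 * π) = sphere c |R| := by
  rw [← range_circleMap]
  refine (image_subset_range _ _).antisymm (range_subset_iff.2 fun t => ?_)
  obtain ⟨s, hs, hst⟩ := (periodic_circleMap c R).exists_mem_Ico₀ two_pi_pos t
  exact ⟨s, hs, hst.symm⟩

variable {W : ℂ → ℂ}

theorem injOn_sphere_iff_injOn_comp_circleMap :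
    InjOn W (sphere 0 1) ↔ InjOn (W ∘ circleMap 0 1) (Ico 0 (2 * π)) := by
  have hinj : InjOn (circleMap 0 1) (Ico 0 (2 * π)) :=
    injOn_circleMap_of_abs_sub_le' one_ne_zero (sub_zero _).le
  refine ⟨fun h => h.comp hinj fun t _ => by simp, fun h => ?_⟩
  rw [← abs_one, ← image_circleMap_Ico_two_pi]
  exact h.image_of_comp

theorem exists_direction_wirtinger (hW : ContDiff ℝ 1 W) (hinj : InjOn W (sphere 0 1))
    (hJ : ∀ ζ ∈ sphere (0 : ℂ) 1, 0 < Jac W ζ) :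
    ∃ (φ : ℝ → ℝ) (n : ℕ), Continuous φ ∧ (∀ t, φ (t + 2 * π) = φ t - n * (2 * π)) ∧
      ∀ t, 0 < (wirtinger W (circleMap 0 1 t) * Complex.exp (-(φ t * Complex.I))).re := by
  have hF : ContDiff ℝ 1 (W ∘ circleMap 0 1) := hW.comp (contDiff_circleMap 0 1)
  have hderiv : ∀ t, deriv (W ∘ circleMap 0 1) t = _ := fun t =>
    (hasDerivAt_comp_circleMap (hW.differentiable one_ne_zero _)).deriv
  have hlt : ∀ t, ‖wirtingerConj W (circleMap 0 1 t) * conj (circleMap 0 1 t * Complex.I)‖ <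
      ‖wirtinger W (circleMap 0 1 t) * (circleMap 0 1 t * Complex.I)‖ := fun t => by
    simpa using (jac_pos_iff W _).1 (hJ (circleMap 0 1 t) (by simp))
  have hF' : ∀ t, deriv (W ∘ circleMap 0 1) t ≠ 0 := fun t h => by
    rw [hderiv, add_eq_zero_iff_eq_neg] at h
    exact (hlt t).ne (by rw [h, norm_neg])
  obtain ⟨Λ, hΛ, hexp, hturn⟩ := exists_log_deriv_of_simple_closed hF
    ((periodic_circleMap 0 1).comp W) two_pi_pos hF' (injOn_sphere_iff_injOn_comp_circleMap.1 hinj)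
  obtain ⟨n, hn⟩ : ∃ n : ℕ, ∀ t, (Λ (t + 2 * π)).im = (Λ t).im + 2 * π - n * (2 * π) := by
    rcases hturn with h | h
    · exact ⟨0, fun t => by simp [h]⟩
    · refine ⟨2, fun t => ?_⟩
      simp [h]
      ring
  refine ⟨fun t => (Λ t).im - (t + π / 2), n, by fun_prop, fun t => by simp only [hn]; ring,
    fun t => ?_⟩
  have hpos := re_mul_exp_neg_im_mul_I_pos ((hexp t).trans (hderiv t)) (hlt t)
  have hrot : circleMap 0 1 t * Complex.I = Complex.exp ((t + π / 2 : ℝ) * Complex.I) := by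
    rw [circleMap, Complex.ofReal_one, one_mul, zero_add, Complex.ofReal_add, add_mul,
      Complex.exp_add]
    push_cast
    rw [Complex.exp_pi_div_two_mul_I]
  rw [hrot, mul_assoc, ← Complex.exp_add] at hpos
  convert hpos using 4
  push_cast
  ring

theorem jac_pos_of_jac_pos_sphere {A B : ℂ → ℂ} (hW : ContDiff ℝ 1 W)
    (hA : DifferentiableOn ℂ A (ball 0 1)) (hB : DifferentiableOn ℂ B (ball 0 1))
    (hWAB : ∀ z ∈ ball (0 : ℂ) 1, W z = A z + conj (B z)) (hinj : InjOn W (sphere 0 1))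
    (hJ : ∀ ζ ∈ sphere (0 : ℂ) 1, 0 < Jac W ζ) :
    ∀ z ∈ closedBall (0 : ℂ) 1, 0 < Jac W z := by
  have ha := diffContOnCl_wirtinger isOpen_ball hA hB hWAB hW
  have hb := diffContOnCl_conj_wirtingerConj isOpen_ball hA hB hWAB hW
  have hne : ∀ z ∈ closedBall (0 : ℂ) 1, wirtinger W z ≠ 0 := by
    obtain ⟨φ, n, hφ, hn, hpos⟩ := exists_direction_wirtinger hW hinj hJ
    rw [← ball_union_sphere]
    rintro z (hz | hz)
    · exact (eq_zero_and_ne_zero_of_re_mul_exp_neg_pos ha hφ hn hpos).2 z hz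
    · exact norm_pos_iff.1 ((norm_nonneg _).trans_lt ((jac_pos_iff W z).1 (hJ z hz)))
  have hquot : ∀ z ∈ closedBall (0 : ℂ) 1,
      ‖(wirtinger W z)⁻¹ • conj (wirtingerConj W z)‖ < 1 ↔ 0 < Jac W z := fun z hz => by
    rw [jac_pos_iff, norm_smul, norm_inv, Complex.norm_conj,
      inv_mul_lt_iff₀ (norm_pos_iff.2 (hne z hz)), mul_one]
  rw [← closure_ball _ one_ne_zero] at hne hquot ⊢
  intro z hz
  rw [← hquot z hz]
  refine norm_lt_of_forall_mem_frontier_norm_lt isBounded_ball ((ha.inv hne).smul hb)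
    (fun ζ hζ => (hquot ζ (frontier_subset_closure hζ)).2 (hJ ζ ?_)) hz
  rwa [frontier_ball _ one_ne_zero] at hζ

theorem contDiffOn_poissonExt {F : ℝ → ℂ} (hF : Continuous F)
    (hFp : Function.Periodic F (2 * π)) :
    ContDiffOn ℝ (⊤ : ℕ∞) (poissonExt F) (ball 0 1) := by
  obtain ⟨A, B, hA, hB, hAB⟩ := exists_poissonExt_eq_add_conj hF hFp
  have hA' : ContDiffOn ℝ (⊤ : ℕ∞) A (ball 0 1) := (hA.contDiffOn isOpen_ball).restrict_scalars ℝ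
  have hB' : ContDiffOn ℝ (⊤ : ℕ∞) B (ball 0 1) := (hB.contDiffOn isOpen_ball).restrict_scalars ℝ
  exact (hA'.add (Complex.conjCLE.contDiff.comp_contDiffOn hB')).congr hAB

end Jacobian

theorem alessandrini_nesi_general {D : Set ℂ} (hDo : IsOpen D) (hDb : Bornology.IsBounded D)
    {F : ℝ → ℂ} (hF : Continuous F) (hFp : Function.Periodic F (2 * π))
    (hFinj : InjOn F (Ico 0 (2 * π))) (hfront : F '' Ico 0 (2 * π) = frontier D)
    {W : ℂ → ℂ} (hW : ContDiff ℝ 1 W) (hWF : EqOn W (poissonExt F) (ball 0 1))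
    (hJ : ∀ ζ ∈ sphere (0 : ℂ) 1, 0 < Jac W ζ) :
    BijOn (poissonExt F) (ball 0 1) D ∧ ContDiffOn ℝ (⊤ : ℕ∞) (poissonExt F) (ball 0 1) ∧
      ∀ z ∈ ball (0 : ℂ) 1, 0 < Jac (poissonExt F) z := by
  have hbd : W ∘ circleMap 0 1 = F :=
    funext (eq_boundary_of_eqOn_poissonExt hF hFp hW.continuous hWF)
  have hinj : InjOn W (sphere 0 1) := injOn_sphere_iff_injOn_comp_circleMap.2 (hbd ▸ hFinj)
  have himage : W '' sphere 0 1 = frontier D := by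
    rw [← abs_one, ← image_circleMap_Ico_two_pi, ← image_comp, hbd, hfront]
  obtain ⟨A, B, hA, hB, hAB⟩ := exists_poissonExt_eq_add_conj hF hFp
  have hjac := jac_pos_of_jac_pos_sphere hW hA hB (fun z hz => (hWF hz).trans (hAB z hz)) hinj hJ
  have hloc : IsLocalHomeomorphOn W (closedBall 0 1) :=
    isLocalHomeomorphOn_of_det_fderiv_ne_zero (fun z _ => hW.contDiffAt)
      fun z hz => (hjac z hz).ne'
  have hbij := bijOn_ball_of_isLocalHomeomorphOn hW.continuous hDo hDb hloc hinj himage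
  refine ⟨hbij.congr hWF, contDiffOn_poissonExt hF hFp, fun z hz => ?_⟩
  have heq : W =ᶠ[𝓝 z] poissonExt F := eventually_of_mem (isOpen_ball.mem_nhds hz) hWF
  rw [Jac, ← heq.fderiv_eq]
  exact hjac z (ball_subset_closedBall hz)

/-- Alessandrini–Nesi criterion ('if' direction): if `F` is an orientation-preserving
`C¹` diffeomorphism of the circle onto `∂D`, `w = P[F]` is `C¹` up to the boundary and
the boundary Jacobian is everywhere positive, then `w` is a diffeomorphism of the unit
disk onto `D`. -/
theorem alessandrini_nesi
    (D : Set ℂ) (hDo : IsOpen D) (hDb : Bornology.IsBounded D) (hDc : IsConnected D)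
    (F : ℝ → ℂ) (hF : ContDiff ℝ 1 F) (hFper : ∀ t, F (t + 2 * π) = F t)
    (hF' : ∀ t, deriv F t ≠ 0)
    (hFinj : InjOn F (Ico 0 (2 * π)))
    (hfront : F '' Ico 0 (2 * π) = frontier D)
    -- orientation preserving: the inner normal `i F'(t)` points into `D`
    (horient : ∀ t, ∃ ε > (0:ℝ), ∀ u ∈ Ioo (0:ℝ) ε,
        F t + (u : ℂ) * (Complex.I * deriv F t) ∈ D)
    (W : ℂ → ℂ) (hW : ContDiff ℝ 1 W)
    (hWw : Set.EqOn W (poissonExt F) (Metric.ball 0 1))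
    (hJ : ∀ ζ : ℂ, ‖ζ‖ = 1 → 0 < Jac W ζ) :
    Set.BijOn (poissonExt F) (Metric.ball (0:ℂ) 1) D ∧
    ContDiffOn ℝ (⊤ : ℕ∞) (poissonExt F) (Metric.ball (0:ℂ) 1) ∧
    ∀ z ∈ Metric.ball (0:ℂ) 1, Jac (poissonExt F) z ≠ 0 := by
  obtain ⟨hbij, hdiff, hjac⟩ := alessandrini_nesi_general hDo hDb hF.continuous hFper hFinj hfront
    hW hWw fun ζ hζ => hJ ζ (mem_sphere_zero_iff_norm.1 hζ)
  exact ⟨hbij, hdiff, fun z hz => (hjac z hz).ne'⟩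
end
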